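/- arXiv:1103.5305 — 2 statements merged into one kernel-verified Lean document; each statement's English description precedes it below -/
import Mathlib

section
/- Let θ : ℝ → ℝ be smooth, let R ∈ (0,∞), and assume Hypothesis (H_R) holds. Then for every x ∈ ℝ, θ(x)³/135 − θ'(x)²/144 + θ(x)·θ''(x)/180 + (θ''(x) + 8·θ(x)²)·π²/(720·R²) + θ(x)·π⁴/(240·R⁴) + π⁶/(2160·R⁶) ≥ 0. -/
noncomputable section

/-- `g_R(t) = -(R/π)·log(1 - (π/R)·t)`. -/
def gR (R t : ℝ) : ℝ := -(R / Real.pi) * Real.log (1 - (Real.pi / R) * t)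

/-- `f` is a (smooth) solution of `f'' + θ·f = 0`. -/
def IsSolution (θ f : ℝ → ℝ) : Prop :=
  ContDiff ℝ (⊤ : ℕ∞) f ∧ ∀ t, deriv (deriv f) t + θ t * f t = 0

/-- `f₁, f₂` is the fundamental pair of solutions of `f'' + θ·f = 0` at `x`:
`f₁(x) = f₂'(x) = 1`, `f₂(x) = f₁'(x) = 0`. -/
def IsFundPair (θ : ℝ → ℝ) (x : ℝ) (f₁ f₂ : ℝ → ℝ) : Prop :=
  IsSolution θ f₁ ∧ IsSolution θ f₂ ∧
  f₁ x = 1 ∧ deriv f₁ x = 0 ∧ f₂ x = 0 ∧ deriv f₂ x = 1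

/-- The `n`-th `g_R`-Schwarzian `𝒮_n^{θ,g_R}(x)`, computed from the fundamental pair
`f₁, f₂` at `x`: the `n`-th derivative at `t = 0` of `t ↦ h_x(x + g_R(t))`,
where `h_x = f₂/f₁`. -/
def SchR (R x : ℝ) (f₁ f₂ : ℝ → ℝ) (n : ℕ) : ℝ :=
  iteratedDeriv n (fun t => f₂ (x + gR R t) / f₁ (x + gR R t)) 0

/-- The determinant `𝒟_n^{θ,g_R}(x)` of the `n×n` Hankel matrix with `(i,j)` entry
`𝒮_{i+j-1}^{θ,g_R}(x)/(i+j-1)!`. -/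
def DetR (R x : ℝ) (f₁ f₂ : ℝ → ℝ) (n : ℕ) : ℝ :=
  (Matrix.of fun i j : Fin n =>
    SchR R x f₁ f₂ (i.1 + j.1 + 1) / (Nat.factorial (i.1 + j.1 + 1) : ℝ)).det

/-- Hypothesis (H_R): `f₁, f₂` are linearly independent solutions of `f'' + θ·f = 0`
(constant Wronskian `W = f₁f₂' - f₁'f₂ ≠ 0`) and `h = f₂/f₁` admits a meromorphic
extension `H` to the strip `{|Im z| < R}` (holomorphic off the real zeros of `f₁`,
with poles at those zeros) which satisfies `W·Im H(z)·Im z > 0` for `0 < Im z < R`. -/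
def HypR (θ : ℝ → ℝ) (R : ℝ) : Prop :=
  ∃ (f₁ f₂ : ℝ → ℝ) (H : ℂ → ℂ),
    IsSolution θ f₁ ∧ IsSolution θ f₂ ∧
    f₁ 0 * deriv f₂ 0 - deriv f₁ 0 * f₂ 0 ≠ 0 ∧
    (∀ t : ℝ, f₁ t ≠ 0 → H t = ((f₂ t / f₁ t : ℝ) : ℂ)) ∧
    DifferentiableOn ℂ H
      {z : ℂ | |z.im| < R ∧ ∀ t : ℝ, f₁ t = 0 → z ≠ (t : ℂ)} ∧
    (∀ t : ℝ, f₁ t = 0 →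
      Filter.Tendsto (fun z => ‖H z‖) (nhdsWithin (t : ℂ) {(t : ℂ)}ᶜ) Filter.atTop) ∧
    (∀ z : ℂ, 0 < z.im → z.im < R →
      0 < (f₁ 0 * deriv f₂ 0 - deriv f₁ 0 * f₂ 0) * (H z).im * z.im)

/-- `(i,j)` entry (1-based, clamped to ℕ) of the matrix `T(f,n)(t)`:
`f^{(j-i)}(t)/(j-i)!` if `i ≤ j`, and `0` otherwise. -/
def Tentry (f : ℝ → ℝ) (t : ℝ) (i j : ℕ) : ℝ :=
  if i ≤ j then iteratedDeriv (j - i) f t / (Nat.factorial (j - i) : ℝ) else 0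

end

noncomputable section Aux

open Filter Topology Complex
open scoped ComplexConjugate

lemma nsq_id (u v : ℂ) : ‖u - v‖^2 = ‖u - conj v‖^2 - 4 * u.im * v.im := by
  simp only [Complex.sq_norm, Complex.normSq_apply, sub_re, sub_im, conj_re, conj_im]
  ring

lemma sub_conj_ne {u v : ℂ} (hu : 0 < u.im) (hv : 0 < v.im) : u - conj v ≠ 0 := by
  intro h
  have := congrArg Complex.im h
  simp at this
  linarith

lemma cay_lt {u v : ℂ} (hu : 0 < u.im) (hv : 0 < v.im) : ‖(u - v) / (u - conj v)‖ < 1 := by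
  have h0 := norm_pos_iff.2 (sub_conj_ne hu hv)
  rw [norm_div, div_lt_one h0]
  have := nsq_id u v
  have : 0 < u.im * v.im := mul_pos hu hv
  refine lt_of_pow_lt_pow_left₀ 2 h0.le ?_
  nlinarith

lemma schwarzPick {F : ℂ → ℂ} (hF : DifferentiableOn ℂ F {z | 0 < z.im})
    (hpos : ∀ z : ℂ, 0 < z.im → 0 < (F z).im) {w v : ℂ} (hw : 0 < w.im) (hv : 0 < v.im) :
    w.im * v.im * ‖F w - conj (F v)‖^2 ≤ (F w).im * (F v).im * ‖w - conj v‖^2 := by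
  set φ : ℂ → ℂ := fun z => (v - conj v * z) / (1 - z) with hφ
  have h1 : ∀ z : ℂ, ‖z‖ < 1 → 1 - z ≠ 0 := by
    intro z hz h
    have : z = 1 := by linear_combination -h
    simp [this] at hz
  have hφim : ∀ z : ℂ, ‖z‖ < 1 → 0 < (φ z).im := by
    intro z hz
    have e : (φ z).im = v.im * (1 - ‖z‖^2) / normSq (1 - z) := by
      have : normSq (1 - z) ≠ 0 := by simpa using h1 z hz
      simp only [hφ, div_im, Complex.sq_norm]
      rw [← sub_div]
      congr 1
      simp [normSq_apply]
      ring
    rw [e]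
    have : 0 < normSq (1 - z) := normSq_pos.2 (h1 z hz)
    have : 0 < 1 - ‖z‖^2 := by nlinarith [norm_nonneg z]
    positivity
  set G : ℂ → ℂ := fun z => (F (φ z) - F v) / (F (φ z) - conj (F v)) with hG
  have hφd : DifferentiableOn ℂ φ (Metric.ball 0 1) := by
    intro z hz
    apply DifferentiableAt.differentiableWithinAt
    refine DifferentiableAt.div (by fun_prop) (by fun_prop) (h1 z (by simpa using hz))
  have hFφ : DifferentiableOn ℂ (fun z => F (φ z)) (Metric.ball 0 1) :=
    hF.comp hφd (fun z hz => hφim z (by simpa using hz))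
  have hGd : DifferentiableOn ℂ G (Metric.ball 0 1) := by
    refine DifferentiableOn.div (hFφ.sub_const _) (hFφ.sub_const _) ?_
    intro z hz
    exact sub_conj_ne (hpos _ (hφim z (by simpa using hz))) (hpos v hv)
  have hG0 : G 0 = 0 := by simp [hG, hφ]
  set z := (w - v) / (w - conj v) with hz
  have hz1 : ‖z‖ < 1 := cay_lt hw hv
  have hwv := sub_conj_ne hw hv
  have hφz : φ z = w := by
    have := h1 z hz1
    simp only [hφ]
    rw [div_eq_iff this, hz]
    field_simp
    ring
  have key := Complex.norm_le_norm_of_mapsTo_ball hGd (fun z hz => by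
    have := cay_lt (hpos _ (hφim z (by simpa using hz))) (hpos v hv)
    rw [mem_closedBall_zero_iff]
    exact this.le) hG0 hz1
  simp only [hG, hφz] at key
  rw [hz, norm_div, norm_div, div_le_div_iff₀ (norm_pos_iff.2 (sub_conj_ne (hpos w hw) (hpos v hv)))
    (norm_pos_iff.2 hwv)] at key
  have k2 := pow_le_pow_left₀ (by positivity) key 2
  rw [mul_pow, mul_pow, nsq_id, nsq_id w v] at k2
  nlinarith

/-- Schwarz-Pick with weak positivity. -/
lemma schwarzPick' {F : ℂ → ℂ} (hF : DifferentiableOn ℂ F {z | 0 < z.im})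
    (hpos : ∀ z : ℂ, 0 < z.im → 0 ≤ (F z).im) {w v : ℂ} (hw : 0 < w.im) (hv : 0 < v.im) :
    w.im * v.im * ‖F w - conj (F v)‖^2 ≤ (F w).im * (F v).im * ‖w - conj v‖^2 := by
  have hd : ∀ δ : ℝ, 0 < δ → w.im * v.im * ‖(F w + δ * w) - conj (F v + δ * v)‖^2 ≤
      (F w + δ * w).im * (F v + δ * v).im * ‖w - conj v‖^2 := by
    intro δ hδ
    refine schwarzPick (F := fun z => F z + δ * z) (hF.add (by fun_prop)) ?_ hw hv
    intro z hz
    have := hpos z hz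
    simp
    positivity
  have t1 : Tendsto (fun δ : ℝ => w.im * v.im * ‖(F w + δ * w) - conj (F v + δ * v)‖^2)
      (𝓝[>] 0) (𝓝 (w.im * v.im * ‖F w - conj (F v)‖^2)) := by
    refine tendsto_nhdsWithin_of_tendsto_nhds ?_
    exact Continuous.tendsto' (by fun_prop) _ _ (by simp)
  have t2 : Tendsto (fun δ : ℝ => (F w + δ * w).im * (F v + δ * v).im * ‖w - conj v‖^2)
      (𝓝[>] 0) (𝓝 ((F w).im * (F v).im * ‖w - conj v‖^2)) := by
    refine tendsto_nhdsWithin_of_tendsto_nhds ?_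
    exact Continuous.tendsto' (by fun_prop) _ _ (by simp)
  refine le_of_tendsto_of_tendsto t1 t2 ?_
  filter_upwards [self_mem_nhdsWithin] with δ hδ using hd δ hδ

abbrev lU : Filter ℂ := 𝓝[{z | 0 < z.im}] 0

lemma tendsto_I : Tendsto (fun ε : ℝ => (ε : ℂ) * I) (𝓝[>] 0) lU := by
  refine tendsto_nhdsWithin_iff.2 ⟨?_, ?_⟩
  · refine tendsto_nhdsWithin_of_tendsto_nhds ?_
    exact Continuous.tendsto' (by fun_prop) _ _ (by simp)
  · filter_upwards [self_mem_nhdsWithin] with ε hε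
    simpa using hε

/-- imaginary slope -/
lemma slope_im {F A : ℂ → ℂ} {s0 s1 : ℝ} 
    (hA : ∀ z : ℂ, 0 < z.im → F z = s0 + A z * z) (hAt : Tendsto A lU (𝓝 (s1 : ℂ))) :
    Tendsto (fun ε : ℝ => (F (ε * I)).im / ε) (𝓝[>] 0) (𝓝 s1) := by
  have := (Complex.continuous_re.tendsto _).comp (hAt.comp tendsto_I)
  simp only [ofReal_re] at this
  refine this.congr' ?_
  filter_upwards [self_mem_nhdsWithin] with ε hε
  have hε : 0 < ε := hε
  rw [hA _ (by simpa using hε)]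
  simp
  field_simp

lemma slope_nonneg {F A : ℂ → ℂ} {s0 s1 : ℝ} (hpos : ∀ z : ℂ, 0 < z.im → 0 ≤ (F z).im)
    (hA : ∀ z : ℂ, 0 < z.im → F z = s0 + A z * z) (hAt : Tendsto A lU (𝓝 (s1 : ℂ))) : 0 ≤ s1 := by
  refine ge_of_tendsto (slope_im hA hAt) ?_
  filter_upwards [self_mem_nhdsWithin] with ε hε
  have hε : 0 < ε := hε
  exact div_nonneg (hpos _ (by simpa using hε)) hε.le

lemma tendsto_id_lU : Tendsto (fun z : ℂ => z) lU (𝓝 0) := tendsto_nhdsWithin_of_tendsto_nhds tendsto_id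

lemma julia {F A : ℂ → ℂ} {s0 s1 : ℝ} (hF : DifferentiableOn ℂ F {z | 0 < z.im})
    (hpos : ∀ z : ℂ, 0 < z.im → 0 ≤ (F z).im)
    (hA : ∀ z : ℂ, 0 < z.im → F z = s0 + A z * z) (hAt : Tendsto A lU (𝓝 (s1 : ℂ)))
    {w : ℂ} (hw : 0 < w.im) :
    w.im * ‖F w - s0‖^2 ≤ (F w).im * s1 * ‖w‖^2 := by
  have hFt : Tendsto F lU (𝓝 s0) := by
    have : Tendsto (fun z => s0 + A z * z) lU (𝓝 (s0 + s1 * 0)) :=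
      (hAt.mul tendsto_id_lU).const_add _
    simp only [mul_zero, add_zero] at this
    refine this.congr' ?_
    filter_upwards [self_mem_nhdsWithin] with z hz using (hA z hz).symm
  have t1 : Tendsto (fun ε : ℝ => w.im * ‖F w - conj (F (ε * I))‖^2) (𝓝[>] 0)
      (𝓝 (w.im * ‖F w - s0‖^2)) := by
    have h := (Complex.continuous_conj.tendsto _).comp (hFt.comp tendsto_I)
    rw [conj_ofReal] at h
    exact ((h.const_sub (F w)).norm.pow 2).const_mul _
  have t2 : Tendsto (fun ε : ℝ => (F w).im * ((F (ε * I)).im / ε) * ‖w - conj (ε * I)‖^2) (𝓝[>] 0)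
      (𝓝 ((F w).im * s1 * ‖w‖^2)) := by
    have h := (Complex.continuous_conj.tendsto _).comp (tendsto_id_lU.comp tendsto_I)
    have h2 := ((h.const_sub w).norm.pow 2)
    simp only [map_zero, sub_zero] at h2
    exact ((slope_im hA hAt).const_mul _).mul h2
  refine le_of_tendsto_of_tendsto t1 t2 ?_
  filter_upwards [self_mem_nhdsWithin] with ε hε
  have hε : 0 < ε := hε
  have := schwarzPick' hF hpos hw (v := ε * I) (by simpa using hε)
  have e : ((ε : ℂ) * I).im = ε := by simp
  rw [e] at this
  have e2 : (F w).im * ((F (ε * I)).im / ε) * ‖w - conj (ε * I)‖^2 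
    = ((F w).im * (F (ε * I)).im * ‖w - conj (ε * I)‖^2) / ε := by ring
  rw [e2, le_div_iff₀ hε]
  linarith

/-- one step of the continued fraction -/
lemma step {F A : ℂ → ℂ} {s0 s1 : ℝ} (hF : DifferentiableOn ℂ F {z | 0 < z.im})
    (hpos : ∀ z : ℂ, 0 < z.im → 0 < (F z).im) (hs : 0 < s1)
    (hA : ∀ z : ℂ, 0 < z.im → F z = s0 + A z * z) (hAt : Tendsto A lU (𝓝 (s1 : ℂ))) :
    DifferentiableOn ℂ (fun z => -1 / (F z - s0) + 1 / (s1 * z)) {z | 0 < z.im} ∧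
    (∀ z : ℂ, 0 < z.im → 0 ≤ (-1 / (F z - s0) + 1 / (s1 * z)).im) ∧
    (∀ z : ℂ, 0 < z.im → F z - s0 ≠ 0) := by
  have hne : ∀ z : ℂ, 0 < z.im → F z - s0 ≠ 0 := by
    intro z hz h
    have := congrArg Complex.im h
    simp at this
    linarith [hpos z hz]
  have hz0 : ∀ z : ℂ, 0 < z.im → z ≠ 0 := by
    rintro z hz rfl
    simp at hz
  have hs' : (s1 : ℂ) ≠ 0 := by exact_mod_cast hs.ne'
  refine ⟨?_, ?_, hne⟩
  · refine DifferentiableOn.add (DifferentiableOn.div (by fun_prop) (hF.sub_const _) hne)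
      (DifferentiableOn.div (by fun_prop) (by fun_prop) ?_)
    intro z hz
    exact mul_ne_zero hs' (hz0 z hz)
  · intro z hz
    have j := julia hF (fun z hz => (hpos z hz).le) hA hAt hz
    have a : 0 < normSq (F z - s0) := normSq_pos.2 (hne z hz)
    have b : 0 < normSq z := normSq_pos.2 (hz0 z hz)
    rw [Complex.sq_norm, Complex.sq_norm] at j
    have e : (-1 / (F z - s0) + 1 / (s1 * z)).im = 
       (F z).im / normSq (F z - s0) - z.im / (s1 * normSq z) := by
      rw [show (1 : ℂ) / (s1 * z) = ((s1⁻¹ : ℝ) : ℂ) * z⁻¹ by push_cast; field_simp]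
      rw [show (-1 : ℂ) / (F z - s0) = - (F z - s0)⁻¹ by ring]
      rw [add_im, neg_im, im_ofReal_mul, inv_im, inv_im]
      simp
      field_simp
      ring
    rw [e, sub_nonneg, div_le_div_iff₀ (by positivity) a]
    linarith

lemma two_strict {F E : ℂ → ℂ} {m0 m1 m2 m3 : ℝ} (hF : DifferentiableOn ℂ F {z | 0 < z.im})
    (hpos : ∀ z : ℂ, 0 < z.im → 0 < (F z).im) (hs : 0 < m1)
    (hE : ∀ z : ℂ, 0 < z.im → F z = m0 + m1 * z + m2 * z^2 + E z * z^3)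
    (hEt : Tendsto E lU (𝓝 (m3 : ℂ))) : 0 ≤ m1 * m3 - m2^2 := by
  have ti := tendsto_id_lU
  set A : ℂ → ℂ := fun z => m1 + m2 * z + E z * z^2 with hAdef
  have hA : ∀ z : ℂ, 0 < z.im → F z = m0 + A z * z := by
    intro z hz
    rw [hE z hz, hAdef]; ring
  have hAt : Tendsto A lU (𝓝 (m1 : ℂ)) := by
    have := ((ti.const_mul (m2 : ℂ)).const_add (m1 : ℂ)).add (hEt.mul (ti.pow 2))
    simpa using this
  obtain ⟨-, p1, ne⟩ := step hF hpos hs hA hAt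
  have hm : (m1 : ℂ) ≠ 0 := by exact_mod_cast hs.ne'
  have hz0 : ∀ z : ℂ, 0 < z.im → z ≠ 0 := by
    rintro z hz rfl
    simp at hz
  have := slope_nonneg (s0 := m2 / m1^2) (s1 := (m1 * m3 - m2^2) / m1^3)
    (A := fun z => (m1 * E z - m2^2 - m2 * E z * z) / (m1^2 * A z)) p1 ?_ ?_
  · rw [le_div_iff₀ (by positivity)] at this
    simpa using this
  · intro z hz
    have h0 := hz0 z hz
    have h1 := ne z hz
    have h2 : A z ≠ 0 := by
      intro h
      rw [hA z hz, h] at h1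
      simp at h1
    rw [hA z hz, add_sub_cancel_left]
    push_cast
    field_simp
    simp only [hAdef]
    ring
  · have t1 : Tendsto (fun z => m1 * E z - m2^2 - m2 * E z * z) lU (𝓝 (m1 * m3 - m2^2 - m2 * m3 * 0)) :=
      ((hEt.const_mul _).sub_const _).sub ((hEt.const_mul _).mul ti)
    have := t1.div (hAt.const_mul ((m1:ℂ)^2)) (mul_ne_zero (pow_ne_zero _ hm) hm)
    have e : (((m1 * m3 - m2^2) / m1^3 : ℝ) : ℂ) = (m1 * m3 - m2^2 - m2 * m3 * 0) / (m1^2 * m1) := by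
      push_cast
      ring
    rw [e]
    exact this

lemma two_weak {F E : ℂ → ℂ} {m0 m1 m2 m3 : ℝ} (hF : DifferentiableOn ℂ F {z | 0 < z.im})
    (hpos : ∀ z : ℂ, 0 < z.im → 0 ≤ (F z).im) 
    (hE : ∀ z : ℂ, 0 < z.im → F z = m0 + m1 * z + m2 * z^2 + E z * z^3)
    (hEt : Tendsto E lU (𝓝 (m3 : ℂ))) : 0 ≤ m1 * m3 - m2^2 := by
  have ti := tendsto_id_lU
  have hm1 : 0 ≤ m1 := by
    refine slope_nonneg (A := fun z => m1 + m2 * z + E z * z^2) (s0 := m0) hpos ?_ ?_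
    · intro z hz
      rw [hE z hz]; ring
    · have := ((ti.const_mul (m2 : ℂ)).const_add (m1 : ℂ)).add (hEt.mul (ti.pow 2))
      simpa using this
  have hd : ∀ δ : ℝ, 0 < δ → 0 ≤ (m1 + δ) * m3 - m2^2 := by
    intro δ hδ
    refine two_strict (F := fun z => F z + δ * z) (E := E) (m0 := m0) (hF.add (by fun_prop)) ?_ (by linarith) ?_ hEt
    · intro z hz
      have := hpos z hz
      simp
      positivity
    · intro z hz
      simp only [hE z hz]
      push_cast
      ring
  have t : Tendsto (fun δ : ℝ => (m1 + δ) * m3 - m2^2) (𝓝[>] 0) (𝓝 (m1 * m3 - m2^2)) := 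
    tendsto_nhdsWithin_of_tendsto_nhds (Continuous.tendsto' (by fun_prop) _ _ (by simp))
  refine ge_of_tendsto t ?_
  filter_upwards [self_mem_nhdsWithin] with δ hδ using hd δ hδ

lemma three {F E : ℂ → ℂ} {s0 s1 s2 s3 s4 s5 : ℝ} (hF : DifferentiableOn ℂ F {z | 0 < z.im})
    (hpos : ∀ z : ℂ, 0 < z.im → 0 < (F z).im) (hs : 0 < s1)
    (hE : ∀ z : ℂ, 0 < z.im → F z = s0 + s1 * z + s2 * z^2 + s3 * z^3 + s4 * z^4 + E z * z^5)
    (hEt : Tendsto E lU (𝓝 (s5 : ℂ))) :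
    0 ≤ s1 * (s3 * s5 - s4^2) - s2 * (s2 * s5 - s3 * s4) + s3 * (s2 * s4 - s3^2) := by
  have ti := tendsto_id_lU
  set A : ℂ → ℂ := fun z => s1 + s2 * z + s3 * z^2 + s4 * z^3 + E z * z^4 with hAdef
  have hA : ∀ z : ℂ, 0 < z.im → F z = s0 + A z * z := by
    intro z hz
    rw [hE z hz, hAdef]; ring
  have hAt : Tendsto A lU (𝓝 (s1 : ℂ)) := by
    have := ((((ti.const_mul (s2 : ℂ)).const_add (s1 : ℂ)).add ((ti.pow 2).const_mul (s3 : ℂ))).add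
      ((ti.pow 3).const_mul (s4 : ℂ))).add (hEt.mul (ti.pow 4))
    simpa using this
  obtain ⟨d1, p1, ne⟩ := step hF hpos hs hA hAt
  have hm : (s1 : ℂ) ≠ 0 := by exact_mod_cast hs.ne'
  have hz0 : ∀ z : ℂ, 0 < z.im → z ≠ 0 := by
    rintro z hz rfl
    simp at hz
  obtain ⟨m0, hm0⟩ : ∃ m0 : ℝ, m0 = s2 / s1^2 := ⟨_, rfl⟩
  obtain ⟨m1, hm1⟩ : ∃ m1 : ℝ, m1 = s3 / s1^2 - s2 * m0 / s1 := ⟨_, rfl⟩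
  obtain ⟨m2, hm2⟩ : ∃ m2 : ℝ, m2 = s4 / s1^2 - (s2 * m1 + s3 * m0) / s1 := ⟨_, rfl⟩
  obtain ⟨m3, hm3⟩ : ∃ m3 : ℝ, m3 = s5 / s1^2 - (s2 * m2 + s3 * m1 + s4 * m0) / s1 := ⟨_, rfl⟩
  have e0 : s2 = s1^2 * m0 := by rw [hm0]; field_simp
  have e1 : s3 = s1 * (s1 * m1 + s2 * m0) := by rw [hm1]; field_simp; ring
  have e2 : s4 = s1 * (s1 * m2 + s2 * m1 + s3 * m0) := by rw [hm2]; field_simp; ring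
  have e3 : s5 = s1 * (s1 * m3 + s2 * m2 + s3 * m1 + s4 * m0) := by rw [hm3]; field_simp; ring
  have key := two_weak (m0 := m0) (m1 := m1) (m2 := m2) (m3 := m3)
    (E := fun z => (E z - s1 * (s4 * m0 + s3 * m1 + s2 * m2) - z * s1 * (E z * m0 + s4 * m1 + s3 * m2)
      - z^2 * s1 * (E z * m1 + s4 * m2) - z^3 * s1 * E z * m2) / (s1 * A z)) d1 p1 ?_ ?_
  · have : s1 * (s3 * s5 - s4^2) - s2 * (s2 * s5 - s3 * s4) + s3 * (s2 * s4 - s3^2)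
      = s1^5 * (m1 * m3 - m2^2) := by
      rw [e3, e2, e1, e0]; ring
    rw [this]
    positivity
  · intro z hz
    have h0 := hz0 z hz
    have h1 := ne z hz
    have h2 : A z ≠ 0 := by
      intro h
      rw [hA z hz, h] at h1
      simp at h1
    rw [hA z hz, add_sub_cancel_left]
    have c0 : (s2 : ℂ) = s1^2 * m0 := by exact_mod_cast e0
    have c1 : (s3 : ℂ) = s1 * (s1 * m1 + s2 * m0) := by exact_mod_cast e1
    have c2 : (s4 : ℂ) = s1 * (s1 * m2 + s2 * m1 + s3 * m0) := by exact_mod_cast e2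
    field_simp
    simp only [hAdef]
    linear_combination z * c0 + z^2 * c1 + z^3 * c2
  · have t1 : Tendsto (fun z => (E z - s1 * (s4 * m0 + s3 * m1 + s2 * m2) - z * s1 * (E z * m0 + s4 * m1 + s3 * m2)
      - z^2 * s1 * (E z * m1 + s4 * m2) - z^3 * s1 * E z * m2)) lU
       (𝓝 (s5 - s1 * (s4 * m0 + s3 * m1 + s2 * m2) - 0 * s1 * (s5 * m0 + s4 * m1 + s3 * m2)
      - 0^2 * s1 * (s5 * m1 + s4 * m2) - 0^3 * s1 * s5 * m2)) := 
      (((hEt.sub_const _).sub ((ti.mul_const _).mul (((hEt.mul_const _).add_const _).add_const _))).sub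
       (((ti.pow 2).mul_const _).mul ((hEt.mul_const _).add_const _))).sub
        ((((ti.pow 3).mul_const _).mul hEt).mul_const _)
    have := t1.div (hAt.const_mul (s1:ℂ)) (mul_ne_zero hm hm)
    have c3 : (s5 : ℂ) = s1 * (s1 * m3 + s2 * m2 + s3 * m1 + s4 * m0) := by exact_mod_cast e3
    have e : (m3 : ℂ) = (s5 - s1 * (s4 * m0 + s3 * m1 + s2 * m2) - 0 * s1 * (s5 * m0 + s4 * m1 + s3 * m2)
      - 0^2 * s1 * (s5 * m1 + s4 * m2) - 0^3 * s1 * s5 * m2) / (s1 * s1) := by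
      rw [eq_div_iff (mul_ne_zero hm hm)]
      linear_combination -c3
    rw [e]
    exact this

lemma taylor5 {F : ℂ → ℂ} {s0 s1 s2 s3 s4 s5 : ℝ} (hF : AnalyticAt ℂ F 0)
    (h0 : F 0 = s0) (h1 : deriv F 0 = s1) (h2 : deriv (deriv F) 0 = s2)
    (h3 : deriv (deriv (deriv F)) 0 = s3) (h4 : deriv (deriv (deriv (deriv F))) 0 = s4)
    (h5 : deriv (deriv (deriv (deriv (deriv F)))) 0 = s5) :
    ∃ E : ℂ → ℂ, (∀ z : ℂ, 0 < z.im → F z = s0 + s1 * z + ((s2 / 2 : ℝ) : ℂ) * z^2 +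
      ((s3 / 6 : ℝ) : ℂ) * z^3 + ((s4 / 24 : ℝ) : ℂ) * z^4 + E z * z^5) ∧
      Tendsto E lU (𝓝 ((s5 / 120 : ℝ) : ℂ)) := by
  have hO := (hF.hasFPowerSeriesAt.isBigO_sub_partialSum_pow 6)
  have hz0 : ∀ z : ℂ, 0 < z.im → z ≠ 0 := by
    rintro z hz rfl
    simp at hz
  refine ⟨fun z => (F z - (s0 + s1 * z + ((s2 / 2 : ℝ) : ℂ) * z^2 +
      ((s3 / 6 : ℝ) : ℂ) * z^3 + ((s4 / 24 : ℝ) : ℂ) * z^4)) / z^5, ?_, ?_⟩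
  · intro z hz
    have := hz0 z hz
    field_simp
    ring
  · have e : ∀ z : ℂ, (FormalMultilinearSeries.ofScalars ℂ
        (fun n ↦ iteratedDeriv n F 0 / n.factorial)).partialSum 6 z
        = s0 + s1 * z + ((s2 / 2 : ℝ) : ℂ) * z^2 +
      ((s3 / 6 : ℝ) : ℂ) * z^3 + ((s4 / 24 : ℝ) : ℂ) * z^4 + ((s5 / 120 : ℝ) : ℂ) * z^5 := by
      intro z
      simp only [FormalMultilinearSeries.partialSum, Finset.sum_range_succ, Finset.sum_range_zero,
        FormalMultilinearSeries.ofScalars_apply_eq, iteratedDeriv_succ, iteratedDeriv_zero, h0, h1, h2, h3, h4, h5]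
      simp [Nat.factorial]
    simp only [e, zero_add] at hO
    have hO' := hO.mono (nhdsWithin_le_nhds (s := {z : ℂ | 0 < z.im}))
    have h6 : Tendsto (fun z => (F z - (s0 + s1 * z + ((s2 / 2 : ℝ) : ℂ) * z^2 +
      ((s3 / 6 : ℝ) : ℂ) * z^3 + ((s4 / 24 : ℝ) : ℂ) * z^4 + ((s5 / 120 : ℝ) : ℂ) * z^5)) / z^5) lU (𝓝 0) := by
      refine (Asymptotics.IsLittleO.tendsto_div_nhds_zero ?_)
      refine hO'.trans_isLittleO ?_
      have : (fun z : ℂ => z^6) =o[𝓝 0] (fun z => z^5) := Asymptotics.isLittleO_pow_pow (by norm_num)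
      have := (this.mono (nhdsWithin_le_nhds (s := {z : ℂ | 0 < z.im}))).norm_left
      simpa only [norm_pow] using this
    have h7 := h6.add_const ((s5 / 120 : ℝ) : ℂ)
    rw [zero_add] at h7
    refine h7.congr' ?_
    filter_upwards [self_mem_nhdsWithin] with z hz
    have := hz0 z hz
    field_simp
    ring

lemma transfer {G : ℂ → ℂ} {g g' : ℝ → ℝ} (hG : AnalyticAt ℂ G 0)
    (h : ∀ᶠ t : ℝ in 𝓝 0, G t = g t) (hg : ∀ᶠ t : ℝ in 𝓝 0, HasDerivAt g (g' t) t) :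
    ∀ᶠ t : ℝ in 𝓝 0, deriv G t = g' t := by
  have ha : ∀ᶠ t : ℝ in 𝓝 0, AnalyticAt ℂ G t :=
    (Complex.continuous_ofReal.tendsto' 0 0 (by simp)).eventually hG.eventually_analyticAt
  filter_upwards [ha, hg, h.eventually_nhds] with t h1 h2 h3
  have a := h1.differentiableAt.hasDerivAt.comp_ofReal
  have b := h2.ofReal_comp.congr_of_eventuallyEq h3
  exact a.unique b

lemma scaled {f P γ σ : ℝ → ℝ} {κ W P' f' : ℝ} (n : ℕ) {t : ℝ}
    (hs : f (σ t) ≠ 0) (dg : HasDerivAt σ (γ t) t) (dγ : HasDerivAt γ (κ * γ t ^ 2) t)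
    (hf : HasDerivAt f f' (σ t)) (hP : HasDerivAt P P' (σ t)) :
    HasDerivAt (fun t => W * γ t ^ (n + 1) * (f (σ t) ^ 2)⁻¹ * P (σ t))
      (W * γ t ^ (n + 2) * (f (σ t) ^ 2)⁻¹ *
       (((n + 1) * κ - 2 * (f' / f (σ t))) * P (σ t) + P')) t := by
  have df := HasDerivAt.comp t hf dg
  have dP := HasDerivAt.comp t hP dg
  have de := (df.pow 2).inv (pow_ne_zero 2 hs)
  have := (((dγ.pow (n + 1)).const_mul W).mul de).mul dP
  refine this.congr_deriv ?_
  simp only [Pi.pow_apply, Pi.mul_apply, Pi.inv_apply, Function.comp_apply, Nat.add_sub_cancel]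
  generalize f (σ t) = a at *
  generalize P (σ t) = b at *
  generalize γ t = c at *
  push_cast
  field_simp
  ring

lemma sigma_deriv {κ x t : ℝ} (hκ : κ ≠ 0) (ht : 0 < 1 - κ * t) :
    HasDerivAt (fun t => x + -(1/κ) * Real.log (1 - κ * t)) ((1 - κ * t)⁻¹) t ∧
    HasDerivAt (fun t => (1 - κ * t)⁻¹) (κ * ((1 - κ * t)⁻¹)^2) t := by
  have d1 : HasDerivAt (fun t => 1 - κ * t) (-κ) t := by
    simpa using ((hasDerivAt_id t).const_mul κ).const_sub 1
  have h := ht.ne'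
  constructor
  · refine (((d1.log h).const_mul (-(1/κ))).const_add x).congr_deriv ?_
    field_simp
  · refine (d1.inv h).congr_deriv ?_
    field_simp

/-- Analytic core, at a point where `f₁` does not vanish. -/
lemma core {θ f₁ f₂ : ℝ → ℝ} {H : ℂ → ℂ} {R W : ℝ} (hθ : ContDiff ℝ (⊤ : ℕ∞) θ) (hR : 0 < R)
    (hf₁ : ContDiff ℝ (⊤ : ℕ∞) f₁) (h₁ : ∀ t, deriv (deriv f₁) t + θ t * f₁ t = 0)
    (hf₂ : ContDiff ℝ (⊤ : ℕ∞) f₂) 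
    (hW0 : W ≠ 0) (hW : ∀ t, f₁ t * deriv f₂ t - deriv f₁ t * f₂ t = W)
    (hH : ∀ t : ℝ, f₁ t ≠ 0 → H t = ((f₂ t / f₁ t : ℝ) : ℂ))
    (hHd : DifferentiableOn ℂ H {z : ℂ | |z.im| < R ∧ ∀ t : ℝ, f₁ t = 0 → z ≠ (t : ℂ)})
    (hHp : ∀ z : ℂ, 0 < z.im → z.im < R → 0 < W * (H z).im * z.im)
    {x : ℝ} (hx : f₁ x ≠ 0) :
      0 ≤ θ x ^ 3 / 135 - (deriv θ x) ^ 2 / 144 + θ x * deriv (deriv θ) x / 180 +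
        (deriv (deriv θ) x + 8 * θ x ^ 2) * Real.pi ^ 2 / (720 * R ^ 2) +
        θ x * Real.pi ^ 4 / (240 * R ^ 4) + Real.pi ^ 6 / (2160 * R ^ 6) := by
  obtain ⟨κ, hκ⟩ : ∃ κ : ℝ, κ = Real.pi / R := ⟨_, rfl⟩
  have hκ0 : 0 < κ := by rw [hκ]; positivity
  have hκR : 1 / κ * Real.pi = R := by
    rw [hκ]; field_simp
  have hinf : ((⊤ : ℕ∞) : WithTop ℕ∞) ≠ 0 := by simp
  set σ : ℝ → ℝ := fun t => x + -(1/κ) * Real.log (1 - κ * t) with hσ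
  set γ : ℝ → ℝ := fun t => (1 - κ * t)⁻¹ with hγ
  set c : ℂ → ℂ := fun z => x + -(1/κ) * Complex.log (1 - κ * z) with hc
  set F : ℂ → ℂ := fun z => W * H (c z) with hFdef
  have hcim : ∀ z : ℂ, 0 < z.im → 0 < (c z).im ∧ (c z).im < R := by
    intro z hz
    have e : (c z).im = -(1/κ) * arg (1 - κ * z) := by
      have : c z = x + ((-(1/κ) : ℝ) : ℂ) * Complex.log (1 - κ * z) := by simp [hc]
      rw [this, add_im, im_ofReal_mul, log_im]
      simp
    have him : (1 - κ * z).im < 0 := by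
      simp; positivity
    have a1 := arg_neg_iff.2 him
    have a2 := neg_pi_lt_arg (1 - κ * z)
    have hk : 0 < 1 / κ := by positivity
    rw [e]
    constructor
    · nlinarith
    · rw [← hκR]; nlinarith
  have hcd : ∀ z : ℂ, 1 - κ * z ∈ slitPlane → DifferentiableAt ℂ c z := by
    intro z hz
    have h : DifferentiableAt ℂ (fun z : ℂ => Complex.log (1 - κ * z)) z :=
      DifferentiableAt.clog (f := fun z : ℂ => 1 - κ * z) (by fun_prop) hz
    exact (h.const_mul _).const_add _
  have hS : ∀ z : ℂ, 0 < z.im → z.im < R → DifferentiableAt ℂ H z := by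
    intro z h1 h2
    refine (hHd z ⟨by rwa [abs_of_pos h1], ?_⟩).differentiableAt ?_
    · rintro t - rfl
      simp at h1
    · have : {z : ℂ | 0 < z.im} ∩ {z | z.im < R} ∈ 𝓝 z :=
        ((isOpen_lt continuous_const Complex.continuous_im).inter
          (isOpen_lt Complex.continuous_im continuous_const)).mem_nhds ⟨h1, h2⟩
      filter_upwards [this] with w hw
      refine ⟨by rw [abs_of_pos hw.1]; exact hw.2, ?_⟩
      rintro t - rfl
      simp at hw
  have hFd : DifferentiableOn ℂ F {z | 0 < z.im} := by
    intro z hz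
    refine DifferentiableAt.differentiableWithinAt ?_
    have hz' := hcim z hz
    refine DifferentiableAt.const_mul ?_ _
    refine DifferentiableAt.comp z (hS _ hz'.1 hz'.2) (hcd z ?_)
    right
    have hz : 0 < z.im := hz
    simp [hκ0.ne', hz.ne']
  have hFpos : ∀ z : ℂ, 0 < z.im → 0 < (F z).im := by
    intro z hz
    have hz' := hcim z hz
    have := hHp _ hz'.1 hz'.2
    rw [hFdef, im_ofReal_mul]
    exact pos_of_mul_pos_left this hz'.1.le
  have hc0 : c 0 = x := by simp [hc]
  have hHx : AnalyticAt ℂ H x := by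
    have hev : ∀ᶠ z : ℂ in 𝓝 (x : ℂ), |z.im| < R ∧ ∀ t : ℝ, f₁ t = 0 → z ≠ (t : ℂ) := by
      have e1 : ∀ᶠ z : ℂ in 𝓝 (x : ℂ), |z.im| < R := by
        refine (isOpen_lt (by fun_prop) continuous_const).mem_nhds ?_
        simpa using hR
      have e2 : ∀ᶠ z : ℂ in 𝓝 (x : ℂ), f₁ z.re ≠ 0 := by
        have : Continuous fun z : ℂ => f₁ z.re := hf₁.continuous.comp Complex.continuous_re
        exact this.continuousAt.eventually_ne (by simpa using hx)
      filter_upwards [e1, e2] with z h1 h2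
      refine ⟨h1, ?_⟩
      rintro t ht rfl
      exact h2 (by simpa using ht)
    refine (hHd.analyticAt hev)
  have hFa : AnalyticAt ℂ F 0 := by
    refine AnalyticAt.mul analyticAt_const ?_
    refine AnalyticAt.comp (by rwa [hc0]) ?_
    refine AnalyticAt.add analyticAt_const (AnalyticAt.mul analyticAt_const ?_)
    refine AnalyticAt.clog (by fun_prop) ?_
    simp
  have hσ0 : σ 0 = x := by simp [hσ]
  have hev1 : ∀ᶠ t : ℝ in 𝓝 0, 0 < 1 - κ * t := by
    refine (isOpen_lt continuous_const (by fun_prop)).mem_nhds ?_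
    simp
  have hev2 : ∀ᶠ t : ℝ in 𝓝 0, f₁ (σ t) ≠ 0 := by
    have h1 : ContinuousAt σ 0 := (sigma_deriv hκ0.ne' (by simp)).1.continuousAt
    have : ContinuousAt (fun t => f₁ (σ t)) 0 := 
      ContinuousAt.comp (f := σ) hf₁.continuous.continuousAt h1
    exact this.eventually_ne (by rwa [hσ0])
  have D1 : ∀ s, HasDerivAt f₁ (deriv f₁ s) s := fun s => (hf₁.differentiable hinf s).hasDerivAt
  have D2 : ∀ s, HasDerivAt f₂ (deriv f₂ s) s := fun s => (hf₂.differentiable hinf s).hasDerivAt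
  have D1' : ∀ s, HasDerivAt (deriv f₁) (-(θ s * f₁ s)) s := by
    intro s
    have := ((contDiff_infty_iff_deriv.1 hf₁).2.differentiable hinf s).hasDerivAt
    rwa [eq_neg_of_add_eq_zero_left (h₁ s)] at this
  have hθ1 := (contDiff_infty_iff_deriv.1 hθ).2
  have Dθ : ∀ s, HasDerivAt θ (deriv θ s) s := fun s => (hθ.differentiable hinf s).hasDerivAt
  have Dθ' : ∀ s, HasDerivAt (deriv θ) (deriv (deriv θ) s) s :=
    fun s => (hθ1.differentiable hinf s).hasDerivAt
  set r : ℝ → ℝ := fun s => deriv f₁ s / f₁ s with hr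
  have Dr : ∀ s, f₁ s ≠ 0 → HasDerivAt r (-θ s - r s ^ 2) s := by
    intro s hs
    refine ((D1' s).div (D1 s) hs).congr_deriv ?_
    simp only [hr]
    field_simp
  set P2 : ℝ → ℝ := fun s => κ - 2 * r s with hP2
  set P3 : ℝ → ℝ := fun s => 2 * κ^2 - 6 * κ * r s + 6 * r s ^ 2 + 2 * θ s with hP3
  set P4 : ℝ → ℝ := fun s => 6 * κ^3 - 22 * κ^2 * r s + 36 * κ * r s ^ 2 + 12 * κ * θ s
    - 24 * r s ^ 3 - 16 * (r s * θ s) + 2 * deriv θ s with hP4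
  set P5 : ℝ → ℝ := fun s => P4 s * (4 * κ - 2 * r s) + 
    (-22 * κ^2 + 72 * κ * r s - 72 * r s ^2 - 16 * θ s) * (-θ s - r s ^ 2) + 12 * κ * deriv θ s
      - 16 * (r s * deriv θ s) + 2 * deriv (deriv θ) s with hP5
  have DP2 : ∀ s, f₁ s ≠ 0 → HasDerivAt P2 (-(2 * (-θ s - r s ^ 2))) s := fun s hs =>
    ((Dr s hs).const_mul 2).const_sub κ
  have DP3 : ∀ s, f₁ s ≠ 0 → HasDerivAt P3 ((-6 * κ + 12 * r s) * (-θ s - r s ^ 2) + 2 * deriv θ s) s := by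
    intro s hs
    refine (((((Dr s hs).const_mul (6 * κ)).const_sub (2 * κ^2)).add (((Dr s hs).pow 2).const_mul 6)).add
      ((Dθ s).const_mul 2)).congr_deriv ?_
    push_cast
    ring
  have DP4 : ∀ s, f₁ s ≠ 0 → HasDerivAt P4 ((-22 * κ^2 + 72 * κ * r s - 72 * r s ^2 - 16 * θ s) * (-θ s - r s ^ 2)
      + 12 * κ * deriv θ s - 16 * (r s * deriv θ s) + 2 * deriv (deriv θ) s) s := by
    intro s hs
    refine (((((((Dr s hs).const_mul (22 * κ^2)).const_sub (6 * κ^3)).add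
      (((Dr s hs).pow 2).const_mul (36 * κ))).add ((Dθ s).const_mul (12 * κ))).sub
      (((Dr s hs).pow 3).const_mul 24)).sub (((Dr s hs).mul (Dθ s)).const_mul 16)).add
      ((Dθ' s).const_mul 2) |>.congr_deriv ?_
    push_cast
    ring
  have T0 : ∀ᶠ t : ℝ in 𝓝 0, F t = ((W * (f₂ (σ t) / f₁ (σ t)) : ℝ) : ℂ) := by
    filter_upwards [hev1, hev2] with t h1 h2
    have : c t = (σ t : ℂ) := by
      simp only [hc, hσ]
      push_cast [Complex.ofReal_log h1.le]
      ring
    rw [hFdef]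
    simp only [this, hH _ h2]
    push_cast
    ring
  have hs2 : 0 < W^2 := by positivity
  have T1 := transfer (g' := fun t => W^2 * γ t ^ (0 + 1) * (f₁ (σ t) ^ 2)⁻¹ * 1) hFa T0 (by
    filter_upwards [hev1, hev2] with t h1 h2
    have hg := (sigma_deriv (x := x) hκ0.ne' h1).1
    refine (((HasDerivAt.comp t (D2 _) hg).div (HasDerivAt.comp t (D1 _) hg) h2).const_mul W).congr_deriv ?_
    have hWt := hW (σ t)
    simp only [Function.comp_apply]
    change W * ((deriv f₂ (σ t) * γ t * f₁ (σ t) - f₂ (σ t) * (deriv f₁ (σ t) * γ t)) / f₁ (σ t) ^ 2) = _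
    field_simp
    rw [← hWt]
    ring)
  have T2 := transfer (g' := fun t => W^2 * γ t ^ (1 + 1) * (f₁ (σ t) ^ 2)⁻¹ * P2 (σ t)) hFa.deriv T1 (by
    filter_upwards [hev1, hev2] with t h1 h2
    obtain ⟨hg, hg'⟩ := sigma_deriv (x := x) hκ0.ne' h1
    refine (scaled (W := W^2) 0 h2 hg hg' (D1 _) (hasDerivAt_const (σ t) (1 : ℝ))).congr_deriv ?_
    simp only [hP2, hr]
    push_cast
    ring)
  have T3 := transfer (g' := fun t => W^2 * γ t ^ (2 + 1) * (f₁ (σ t) ^ 2)⁻¹ * P3 (σ t)) hFa.deriv.deriv T2 (by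
    filter_upwards [hev1, hev2] with t h1 h2
    obtain ⟨hg, hg'⟩ := sigma_deriv (x := x) hκ0.ne' h1
    refine (scaled (W := W^2) 1 h2 hg hg' (D1 _) (DP2 _ h2)).congr_deriv ?_
    simp only [hP2, hP3, hr]
    push_cast
    ring)
  have T4 := transfer (g' := fun t => W^2 * γ t ^ (3 + 1) * (f₁ (σ t) ^ 2)⁻¹ * P4 (σ t)) hFa.deriv.deriv.deriv T3 (by
    filter_upwards [hev1, hev2] with t h1 h2
    obtain ⟨hg, hg'⟩ := sigma_deriv (x := x) hκ0.ne' h1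
    refine (scaled (W := W^2) 2 h2 hg hg' (D1 _) (DP3 _ h2)).congr_deriv ?_
    simp only [hP4, hP3, hr]
    push_cast
    ring)
  have T5 := transfer (g' := fun t => W^2 * γ t ^ (4 + 1) * (f₁ (σ t) ^ 2)⁻¹ * P5 (σ t)) hFa.deriv.deriv.deriv.deriv T4 (by
    filter_upwards [hev1, hev2] with t h1 h2
    obtain ⟨hg, hg'⟩ := sigma_deriv (x := x) hκ0.ne' h1
    refine (scaled (W := W^2) 3 h2 hg hg' (D1 _) (DP4 _ h2)).congr_deriv ?_
    simp only [hP4, hP5, hr]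
    push_cast
    ring)
  have hγ0 : γ 0 = 1 := by simp [hγ]
  have T0 := T0.self_of_nhds
  have T1 := T1.self_of_nhds
  have T2 := T2.self_of_nhds
  have T3 := T3.self_of_nhds
  have T4 := T4.self_of_nhds
  have T5 := T5.self_of_nhds
  simp only [hσ0, hγ0, one_pow, mul_one, ofReal_zero] at T0 T1 T2 T3 T4 T5
  obtain ⟨E, hE, hEt⟩ := taylor5 hFa T0 T1 T2 T3 T4 T5
  have hlam : 0 < W^2 * (f₁ x ^ 2)⁻¹ := by positivity
  have key := three hFd hFpos hlam hE hEt
  simp only [hP5, hP4, hP3, hP2] at key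
  generalize W^2 * (f₁ x ^ 2)⁻¹ = L at *
  generalize r x = ρ at *
  have goal_eq : θ x ^ 3 / 135 - (deriv θ x) ^ 2 / 144 + θ x * deriv (deriv θ) x / 180 +
        (deriv (deriv θ) x + 8 * θ x ^ 2) * Real.pi ^ 2 / (720 * R ^ 2) +
        θ x * Real.pi ^ 4 / (240 * R ^ 4) + Real.pi ^ 6 / (2160 * R ^ 6) =
      θ x ^ 3 / 135 - (deriv θ x) ^ 2 / 144 + θ x * deriv (deriv θ) x / 180 +
        (deriv (deriv θ) x + 8 * θ x ^ 2) * κ^2 / 720 + θ x * κ ^ 4 / 240 + κ ^ 6 / 2160 := by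
    rw [hκ]
    field_simp
  rw [goal_eq]
  have hL3 : 0 < L ^ 3 := by positivity
  refine nonneg_of_mul_nonneg_right (a := L ^ 3) ?_ hL3
  refine key.trans_eq ?_
  ring

end Aux

noncomputable section

open MeasureTheory Filter

/-- If θ is smooth, `0 < R`, and Hypothesis (H_R) holds, then for all `x`:
`θ³/135 - (θ')²/144 + θθ''/180 + (θ'' + 8θ²)π²/(720R²) + θπ⁴/(240R⁴) + π⁶/(2160R⁶) ≥ 0`. -/
theorem stmt7 (θ : ℝ → ℝ) (hθ : ContDiff ℝ (⊤ : ℕ∞) θ) (R : ℝ) (hR : 0 < R)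
    (hHyp : HypR θ R) :
    ∀ x : ℝ,
      0 ≤ θ x ^ 3 / 135 - (deriv θ x) ^ 2 / 144 + θ x * deriv (deriv θ) x / 180 +
        (deriv (deriv θ) x + 8 * θ x ^ 2) * Real.pi ^ 2 / (720 * R ^ 2) +
        θ x * Real.pi ^ 4 / (240 * R ^ 4) + Real.pi ^ 6 / (2160 * R ^ 6) := by
  obtain ⟨f₁, f₂, H, ⟨hf₁, h₁⟩, ⟨hf₂, h₂⟩, hW0, hH, hHd, -, hHp⟩ := hHyp
  have hinf : ((⊤ : ℕ∞) : WithTop ℕ∞) ≠ 0 := by simp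
  have hf₁' := (contDiff_infty_iff_deriv.1 hf₁).2
  have hf₂' := (contDiff_infty_iff_deriv.1 hf₂).2
  have hθ1 := (contDiff_infty_iff_deriv.1 hθ).2
  have hθ2 := (contDiff_infty_iff_deriv.1 hθ1).2
  have hWd : ∀ t, HasDerivAt (fun t => f₁ t * deriv f₂ t - deriv f₁ t * f₂ t) 0 t := by
    intro t
    have a1 := (hf₁.differentiable hinf t).hasDerivAt
    have a2 := (hf₂.differentiable hinf t).hasDerivAt
    have b1 := (hf₁'.differentiable hinf t).hasDerivAt
    have b2 := (hf₂'.differentiable hinf t).hasDerivAt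
    refine ((a1.mul b2).sub (b1.mul a2)).congr_deriv ?_
    linear_combination f₁ t * h₂ t - f₂ t * h₁ t
  have hW : ∀ t, f₁ t * deriv f₂ t - deriv f₁ t * f₂ t = f₁ 0 * deriv f₂ 0 - deriv f₁ 0 * f₂ 0 :=
    fun t => is_const_of_deriv_eq_zero (fun s => (hWd s).differentiableAt) (fun s => (hWd s).deriv) t 0
  have hcore := fun x (hx : f₁ x ≠ 0) => core hθ hR hf₁ h₁ hf₂ hW0 hW hH hHd hHp hx
  have hcont := hθ.continuous
  have hcont1 := hθ1.continuous
  have hcont2 := hθ2.continuous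
  intro x
  have hcl : x ∈ closure {y | f₁ y ≠ 0} := by
    rw [mem_closure_iff_frequently]
    intro hev
    have hz : f₁ =ᶠ[nhds x] fun _ => 0 := by
      filter_upwards [hev] with y hy
      simpa using hy
    have d0 : deriv f₁ x = 0 := by
      rw [hz.deriv_eq]; simp
    have v0 : f₁ x = 0 := hz.self_of_nhds
    apply hW0
    rw [← hW x, d0, v0]
    ring
  have hclosed : IsClosed {x : ℝ | 0 ≤ θ x ^ 3 / 135 - (deriv θ x) ^ 2 / 144 + θ x * deriv (deriv θ) x / 180 +
        (deriv (deriv θ) x + 8 * θ x ^ 2) * Real.pi ^ 2 / (720 * R ^ 2) +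
        θ x * Real.pi ^ 4 / (240 * R ^ 4) + Real.pi ^ 6 / (2160 * R ^ 6)} :=
    isClosed_le continuous_const (by fun_prop)
  exact closure_minimal (fun y hy => hcore y hy) hclosed hcl

end
end

section
/- Let θ : ℝ → ℝ be real analytic and let R ∈ (0,∞). For x ∈ ℝ define ρ(x) ∈ ℕ ∪ {∞} as the supremum over integers n ≥ 1 of the rank of the n×n Hankel matrix with (i,j) entry 𝒮_{i+j−1}^{θ,g_R}(x)/(i+j−1)! (1 ≤ i, j ≤ n). Then ρ is constant on ℝ, i.e. ρ(x₁) = ρ(x₂) for all x₁, x₂ ∈ ℝ. -/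
lemma hk_exists (a : ℕ → ℝ) (d : ℕ)
    (h : ∀ n, (Matrix.of fun i j : Fin n => a (i.1 + j.1 + 1)).rank ≤ d) :
    ∃ c : Fin (d+1) → ℝ, c ≠ 0 ∧ ∀ j : ℕ, ∑ e, c e * a (e.1 + j + 1) = 0 := by
  let K : ℕ →o (Submodule ℝ (Fin (d+1) → ℝ))ᵒᵈ :=
    { toFun := fun n => OrderDual.toDual
        { carrier := {c | ∀ j < n, ∑ e, c e * a (e.1 + j + 1) = 0}
          add_mem' := by
            intro x y hx hy j hj
            simp only [Pi.add_apply, add_mul, Finset.sum_add_distrib]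
            rw [hx j hj, hy j hj, add_zero]
          zero_mem' := by intro j hj; simp
          smul_mem' := by
            intro r x hx j hj
            simp only [Pi.smul_apply, smul_eq_mul, mul_assoc, ← Finset.mul_sum]
            rw [hx j hj, mul_zero] }
      monotone' := by
        intro m n hmn
        rw [OrderDual.toDual_le_toDual]
        intro x hx j hj
        exact hx j (lt_of_lt_of_le hj hmn) }
  have hK : ∀ n (c : Fin (d+1) → ℝ), c ∈ (OrderDual.ofDual (K n)) ↔
      ∀ j < n, ∑ e, c e * a (e.1 + j + 1) = 0 := fun n c => Iff.rfl
  obtain ⟨n, hn⟩ := IsArtinian.monotone_stabilizes K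
  have hne : ∃ c : Fin (d+1) → ℝ, c ≠ 0 ∧ c ∈ OrderDual.ofDual (K n) := by
    set N := max n (d+1)
    have hN : d + 1 ≤ N := le_max_right _ _
    set H : Matrix (Fin N) (Fin N) ℝ := Matrix.of fun i j : Fin N => a (i.1 + j.1 + 1) with hH
    have hli : ¬ LinearIndependent ℝ (fun e : Fin (d+1) => H.row (Fin.castLE hN e)) := by
      intro hl
      have h1 := finrank_span_eq_card hl
      have h2 := h N
      rw [Matrix.rank_eq_finrank_span_row] at h2
      have h3 : Submodule.span ℝ (Set.range (fun e : Fin (d+1) => H.row (Fin.castLE hN e))) ≤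
          Submodule.span ℝ (Set.range H.row) := by
        apply Submodule.span_mono
        rintro _ ⟨e, rfl⟩
        exact ⟨_, rfl⟩
      have h4 := Submodule.finrank_mono h3
      rw [h1, Fintype.card_fin] at h4
      have : Module.finrank ℝ (Submodule.span ℝ (Set.range H.row)) ≤ d := h2
      omega
    rw [Fintype.not_linearIndependent_iff] at hli
    obtain ⟨g, hg, i, hi⟩ := hli
    refine ⟨g, fun h0 => hi (by rw [h0]; rfl), ?_⟩
    rw [hK]
    intro j hj
    have := congrFun hg ⟨j, lt_of_lt_of_le hj (le_max_left _ _)⟩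
    simpa [Finset.sum_apply, hH, Matrix.row] using this
  obtain ⟨c, hc, hcK⟩ := hne
  refine ⟨c, hc, fun j => ?_⟩
  have h1 := hn (max n (j+1)) (le_max_left _ _)
  rw [h1, hK] at hcK
  exact hcK j (lt_of_lt_of_le (Nat.lt_succ_self j) (le_max_right _ _))

lemma hk_rank (a : ℕ → ℝ) (d : ℕ) (c : Fin (d+1) → ℝ) (hc : c ≠ 0)
    (h : ∀ j : ℕ, ∑ e, c e * a (e.1 + j + 1) = 0) (n : ℕ) :
    (Matrix.of fun i j : Fin n => a (i.1 + j.1 + 1)).rank ≤ d := by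
  obtain ⟨E, hE0, hEm⟩ : ∃ E : Fin (d+1), c E ≠ 0 ∧ ∀ e, E < e → c e = 0 := by
    obtain ⟨e0, he0⟩ := Function.ne_iff.mp hc
    have hne : (Finset.univ.filter (fun e => c e ≠ 0)).Nonempty := ⟨e0, by simpa using he0⟩
    refine ⟨Finset.max' _ hne, ?_, ?_⟩
    · have := Finset.max'_mem _ hne
      simpa using this
    · intro e he
      by_contra hce
      have := Finset.le_max' (Finset.univ.filter (fun e => c e ≠ 0)) e (by simpa using hce)
      exact absurd he (not_lt.mpr this)
  let r : ℕ → Fin n → ℝ := fun i j => a (i + j.1 + 1)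
  have hrel : ∀ s, ∑ e : Fin (d+1), c e • r (s + e.1) = 0 := by
    intro s
    ext j
    have := h (s + j.1)
    simp only [Finset.sum_apply, Pi.smul_apply, smul_eq_mul, r, Pi.zero_apply]
    rw [← this]
    refine Finset.sum_congr rfl fun e _ => ?_
    congr 2
    omega
  let V := Submodule.span ℝ (Set.range (fun e : Fin E.1 => r e.1))
  have hmem : ∀ i, r i ∈ V := by
    intro i
    induction i using Nat.strong_induction_on with
    | _ i ih =>
    by_cases hi : i < E.1
    · exact Submodule.subset_span ⟨⟨i, hi⟩, rfl⟩
    · have h1 := hrel (i - E.1)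
      rw [← Finset.add_sum_erase _ _ (Finset.mem_univ E)] at h1
      have h2 : i - E.1 + E.1 = i := by omega
      rw [h2] at h1
      have h3 : c E • r i ∈ V := by
        rw [eq_neg_of_add_eq_zero_left h1]
        refine V.neg_mem (V.sum_mem fun e he => ?_)
        rcases lt_or_ge E e with hlt | hge
        · rw [hEm e hlt, zero_smul]; exact V.zero_mem
        · apply V.smul_mem
          apply ih
          have : e ≠ E := (Finset.mem_erase.mp he).1
          have : e.1 ≠ E.1 := fun h => this (Fin.ext h)
          have : e.1 ≤ E.1 := hge
          omega
      exact (V.smul_mem_iff hE0).mp h3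
  rw [Matrix.rank_eq_finrank_span_row]
  have h3 : Submodule.span ℝ (Set.range
      (Matrix.of fun i j : Fin n => a (i.1 + j.1 + 1)).row) ≤ V := by
    rw [Submodule.span_le]
    rintro _ ⟨i, rfl⟩
    exact hmem i.1
  calc _ ≤ Module.finrank ℝ V := Submodule.finrank_mono h3
    _ ≤ Fintype.card (Fin E.1) := finrank_range_le_card _
    _ ≤ d := by rw [Fintype.card_fin]; omega
section

open scoped Nat Topology

lemma ode_exists {E : Type*} [NormedAddCommGroup E] [NormedSpace ℝ E] [CompleteSpace E]
    (A : ℝ → E →L[ℝ] E) (hA : Continuous A) (x : ℝ) (v : E) :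
    ∃ f : ℝ → E, f x = v ∧ ∀ t, HasDerivAt f (A t (f t)) t := by
  let u : ℕ → ℝ → E := fun n => Nat.rec (fun _ => v) (fun _ w t => ∫ s in x..t, A s (w s)) n
  have u0 : ∀ t, u 0 t = v := fun t => rfl
  have us : ∀ n t, u (n+1) t = ∫ s in x..t, A s (u n s) := fun n t => rfl
  have hcont : ∀ n, Continuous (u n) ∧ ∀ t, HasDerivAt (u (n+1)) (A t (u n t)) t := by
    have key : ∀ n, Continuous (u n) → ∀ t, HasDerivAt (u (n+1)) (A t (u n t)) t := by
      intro n hn t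
      have hc : Continuous (fun s => A s (u n s)) := hA.clm_apply hn
      exact intervalIntegral.integral_hasDerivAt_right (hc.intervalIntegrable _ _)
        (hc.stronglyMeasurableAtFilter _ _) hc.continuousAt
    intro n
    induction n with
    | zero =>
      have : Continuous (u 0) := continuous_const
      exact ⟨this, key 0 this⟩
    | succ n ih =>
      have : Continuous (u (n+1)) :=
        continuous_iff_continuousAt.mpr fun t => (ih.2 t).continuousAt
      exact ⟨this, key (n+1) this⟩
  have hb : ∀ N : ℝ, ∃ K : ℝ, 0 ≤ K ∧ ∀ t ∈ Set.Icc (x - N) (x + N), ‖A t‖ ≤ K := by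
    intro N
    obtain ⟨K, hK⟩ := (isCompact_Icc (a := x - N) (b := x + N)).exists_bound_of_continuousOn
      hA.continuousOn
    exact ⟨max K 0, le_max_right _ _, fun t ht => (hK t ht).trans (le_max_left _ _)⟩
  have hbd : ∀ N : ℝ, ∀ K : ℝ, 0 ≤ K → (∀ t ∈ Set.Icc (x - N) (x + N), ‖A t‖ ≤ K) →
      ∀ n, ∀ t ∈ Set.Icc (x - N) (x + N), ‖u n t‖ ≤ ‖v‖ * (K * |t - x|) ^ n / n ! := by
    intro N K hK0 hK n
    induction n with
    | zero => intro t ht; simp [u0]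
    | succ n ih =>
      intro t ht
      rw [us]
      have hfac : ((n+1)! : ℝ) = (n+1) * n ! := by push_cast [Nat.factorial_succ]; ring
      have hf0 : (n ! : ℝ) ≠ 0 := by positivity
      have hstep : ∀ s ∈ Set.Icc (x - N) (x + N), ‖A s (u n s)‖ ≤
          K * (‖v‖ * (K * |s - x|) ^ n / n !) := fun s hs =>
        ((A s).le_opNorm _).trans (mul_le_mul (hK s hs) (ih s hs) (norm_nonneg _) hK0)
      rcases le_total x t with hxt | hxt
      · have h1 : ‖∫ s in x..t, A s (u n s)‖ ≤
            ∫ s in x..t, K * (‖v‖ * (K * (s - x)) ^ n / n !) := by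
          apply intervalIntegral.norm_integral_le_of_norm_le hxt
          · refine Filter.Eventually.of_forall fun s hs => ?_
            have := hstep s ⟨by linarith [hs.1, hs.2, ht.1, ht.2], by linarith [hs.2, ht.2]⟩
            rwa [abs_of_nonneg (by linarith [hs.1])] at this
          · apply Continuous.intervalIntegrable; fun_prop
        refine h1.trans (le_of_eq ?_)
        have hd : ∀ s ∈ Set.uIcc x t, HasDerivAt
            (fun s => ‖v‖ * (K * (s - x)) ^ (n+1) / (n+1)!)
            (K * (‖v‖ * (K * (s - x)) ^ n / n !)) s := by
          intro s _
          have h := ((((((hasDerivAt_id s).sub_const x).const_mul K).pow (n+1)).const_mul ‖v‖).div_const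
            ((n+1)! : ℝ))
          refine h.congr_deriv ?_
          rw [hfac]
          simp
          field_simp
        rw [intervalIntegral.integral_eq_sub_of_hasDerivAt hd (by
          apply Continuous.intervalIntegrable; fun_prop)]
        rw [abs_of_nonneg (by linarith)]
        simp
      · rw [intervalIntegral.integral_symm, norm_neg]
        have h1 : ‖∫ s in t..x, A s (u n s)‖ ≤
            ∫ s in t..x, K * (‖v‖ * (K * (x - s)) ^ n / n !) := by
          apply intervalIntegral.norm_integral_le_of_norm_le hxt
          · refine Filter.Eventually.of_forall fun s hs => ?_
            have := hstep s ⟨by linarith [hs.1, hs.2, ht.1, ht.2],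
              by linarith [hs.1, hs.2, ht.1, ht.2]⟩
            rwa [abs_of_nonpos (by linarith [hs.2]), neg_sub] at this
          · apply Continuous.intervalIntegrable; fun_prop
        refine h1.trans (le_of_eq ?_)
        have hd : ∀ s ∈ Set.uIcc t x, HasDerivAt
            (fun s => - (‖v‖ * (K * (x - s)) ^ (n+1) / (n+1)!))
            (K * (‖v‖ * (K * (x - s)) ^ n / n !)) s := by
          intro s _
          have h := ((((((hasDerivAt_id s).const_sub x).const_mul K).pow (n+1)).const_mul ‖v‖).div_const
            ((n+1)! : ℝ)).neg
          refine h.congr_deriv ?_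
          rw [hfac]
          simp
          field_simp
        rw [intervalIntegral.integral_eq_sub_of_hasDerivAt hd (by
          apply Continuous.intervalIntegrable; fun_prop)]
        rw [abs_of_nonpos (by linarith)]
        simp
  have hsum : ∀ t, Summable (fun n => u n t) := by
    intro t
    obtain ⟨K, hK0, hK⟩ := hb |t - x|
    have ht : t ∈ Set.Icc (x - |t - x|) (x + |t - x|) := by
      constructor <;> cases abs_cases (t - x) <;> linarith
    refine Summable.of_norm_bounded (g := fun n => ‖v‖ * ((K * |t - x|) ^ n / n !))
      ((Real.summable_pow_div_factorial _).mul_left _) fun n => ?_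
    have := hbd _ K hK0 hK n t ht
    rwa [mul_div_assoc] at this
  refine ⟨fun t => ∑' n, u n t, ?_, fun t => ?_⟩
  · show ∑' n, u n x = v
    refine (tsum_eq_single 0 ?_).trans (u0 x)
    intro n hn
    obtain ⟨m, rfl⟩ := Nat.exists_eq_succ_of_ne_zero hn
    rw [Nat.succ_eq_add_one, us, intervalIntegral.integral_same]
  · set N := |t - x| + 1 with hN
    obtain ⟨K, hK0, hK⟩ := hb N
    have hN0 : 0 < N := by positivity
    let g' : ℕ → ℝ → E := fun n s => Nat.casesOn n 0 (fun m => A s (u m s))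
    let b : ℕ → ℝ := fun n => Nat.casesOn n 0 (fun m => K * (‖v‖ * ((K * N) ^ m / m !)))
    have hbs : Summable b := by
      rw [← summable_nat_add_iff 1]
      exact ((Real.summable_pow_div_factorial _).mul_left _).mul_left _
    have hder := hasDerivAt_tsum_of_isPreconnected (g := u) (g' := g') (u := b)
      (t := Set.Ioo (x - N) (x + N)) (y₀ := x) (y := t) hbs isOpen_Ioo isPreconnected_Ioo
      (by
        intro n y hy
        cases n with
        | zero => exact hasDerivAt_const y v
        | succ m => exact (hcont m).2 y)
      (by
        intro n y hy
        cases n with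
        | zero => simp [g', b]
        | succ m =>
          have hy' := Set.Ioo_subset_Icc_self hy
          have h1 := hbd N K hK0 hK m y hy'
          have h2 : |y - x| ≤ N := by
            rw [abs_le]; constructor <;> linarith [hy.1, hy.2]
          show ‖A y (u m y)‖ ≤ K * (‖v‖ * ((K * N) ^ m / m !))
          refine ((A y).le_opNorm _).trans (mul_le_mul (hK y hy') (h1.trans ?_) (norm_nonneg _) hK0)
          rw [mul_div_assoc]
          gcongr)
      ⟨by linarith, by linarith⟩ (hsum x)
      ⟨by cases abs_cases (t - x) <;> linarith, by cases abs_cases (t - x) <;> linarith⟩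
    refine hder.congr_deriv ?_
    have hs' : Summable (fun n => g' n t) := by
      rw [← summable_nat_add_iff 1]
      exact (A t).summable (hsum t)
    rw [hs'.tsum_eq_zero_add, (A t).map_tsum (hsum t)]
    simp [g']

lemma ode_unique {E : Type*} [NormedAddCommGroup E] [NormedSpace ℝ E]
    (A : ℝ → E →L[ℝ] E) (hA : Continuous A) {a b x : ℝ} (hx : x ∈ Set.Ioo a b) (f g : ℝ → E)
    (hf : ∀ t ∈ Set.Ioo a b, HasDerivAt f (A t (f t)) t)
    (hg : ∀ t ∈ Set.Ioo a b, HasDerivAt g (A t (g t)) t) (h : f x = g x) :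
    Set.EqOn f g (Set.Ioo a b) := by
  obtain ⟨K, hK⟩ := (isCompact_Icc (a := a) (b := b)).exists_bound_of_continuousOn
      hA.continuousOn
  refine ODE_solution_unique_of_mem_Ioo (v := fun t y => A t y) (s := fun _ => Set.univ)
    (K := Real.toNNReal K) (fun t ht => ?_) hx
    (fun t ht => ⟨hf t ht, Set.mem_univ _⟩) (fun t ht => ⟨hg t ht, Set.mem_univ _⟩) h
  refine ((A t).lipschitz.weaken ?_).lipschitzOnWith
  rw [← norm_toNNReal]
  exact Real.toNNReal_le_toNNReal (hK t (Set.Ioo_subset_Icc_self ht))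

noncomputable def sysA (θ : ℝ → ℝ) (t : ℝ) : ℝ × ℝ →L[ℝ] ℝ × ℝ :=
  (ContinuousLinearMap.snd ℝ ℝ ℝ).prod (-(θ t) • ContinuousLinearMap.fst ℝ ℝ ℝ)

lemma sysA_cont (θ : ℝ → ℝ) (h : Continuous θ) : Continuous (sysA θ) := by
  have : sysA θ = fun t => ((ContinuousLinearMap.snd ℝ ℝ ℝ).prod 0) +
      (-(θ t)) • ((0 : ℝ × ℝ →L[ℝ] ℝ).prod (ContinuousLinearMap.fst ℝ ℝ ℝ)) := by
    ext t <;> simp [sysA]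
  rw [this]
  fun_prop

lemma sysA_apply (θ : ℝ → ℝ) (t : ℝ) (p : ℝ × ℝ) : sysA θ t p = (p.2, -(θ t) * p.1) := by
  simp [sysA]

lemma sys_hasDeriv {θ f g : ℝ → ℝ} {t : ℝ} (hf : HasDerivAt f (g t) t)
    (hg : HasDerivAt g (-(θ t) * f t) t) :
    HasDerivAt (fun s => (f s, g s)) (sysA θ t (f t, g t)) t := by
  rw [sysA_apply]
  exact hf.prodMk hg

noncomputable def tc (f : ℝ → ℝ) (x : ℝ) (n : ℕ) : ℝ := iteratedDeriv n f x / n !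

lemma tc_mul {f g : ℝ → ℝ} {x : ℝ} (hf : AnalyticAt ℝ f x) (hg : AnalyticAt ℝ g x) (n : ℕ) :
    tc (fun y => f y * g y) x n = ∑ i ∈ Finset.range (n+1), tc f x i * tc g x (n - i) := by
  unfold tc
  rw [iteratedDeriv_fun_mul hf.contDiffAt hg.contDiffAt, Finset.sum_div]
  refine Finset.sum_congr rfl fun i hi => ?_
  have hi' : i ≤ n := by simpa [Nat.lt_succ_iff] using hi
  rw [Nat.cast_choose ℝ hi']
  have h1 : (n ! : ℝ) ≠ 0 := by positivity
  have h2 : (i ! : ℝ) ≠ 0 := by positivity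
  have h3 : ((n - i)! : ℝ) ≠ 0 := by positivity
  field_simp

lemma tc_zero {f : ℝ → ℝ} {x : ℝ} (hf : AnalyticAt ℝ f x) (h : ∀ n, tc f x n = 0) :
    ∀ᶠ y in 𝓝 x, f y = 0 := by
  rw [← analyticOrderAt_eq_top]
  rw [ENat.eq_top_iff_forall_ge]
  intro n
  rw [natCast_le_analyticOrderAt_iff_iteratedDeriv_eq_zero hf]
  intro i _
  have := h i
  have h2 : (i ! : ℝ) ≠ 0 := by positivity
  simpa [tc, h2] using this

lemma tc_congr {f g : ℝ → ℝ} {x : ℝ} (h : f =ᶠ[𝓝 x] g) (n : ℕ) : tc f x n = tc g x n := by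
  unfold tc
  rw [h.iteratedDeriv_eq]

lemma tc_sub {f g : ℝ → ℝ} {x : ℝ} (hf : AnalyticAt ℝ f x) (hg : AnalyticAt ℝ g x) (n : ℕ) :
    tc (fun y => f y - g y) x n = tc f x n - tc g x n := by
  unfold tc
  rw [show (fun y => f y - g y) = f - g from rfl,
    iteratedDeriv_sub hf.contDiffAt hg.contDiffAt, sub_div]

lemma tc_add {f g : ℝ → ℝ} {x : ℝ} (hf : AnalyticAt ℝ f x) (hg : AnalyticAt ℝ g x) (n : ℕ) :
    tc (fun y => f y + g y) x n = tc f x n + tc g x n := by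
  unfold tc
  rw [show (fun y => f y + g y) = f + g from rfl,
    iteratedDeriv_add hf.contDiffAt hg.contDiffAt, add_div]

lemma tc_poly (p : Polynomial ℝ) (n : ℕ) : tc (fun y => p.eval y) 0 n = p.coeff n := by
  have h2 : (n ! : ℝ) ≠ 0 := by positivity
  unfold tc
  have h : ∀ n, iteratedDeriv n (fun y => p.eval y) = fun y => (Polynomial.derivative^[n] p).eval y := by
    intro n
    induction n with
    | zero => simp
    | succ n ih =>
      rw [iteratedDeriv_succ, ih, Function.iterate_succ_apply']
      ext y
      simp
  rw [h]
  simp only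
  rw [← Polynomial.coeff_zero_eq_eval_zero, Polynomial.coeff_iterate_derivative]
  simp [Nat.descFactorial_self, h2]

noncomputable def recA (τ : ℕ → ℝ) (p q : ℝ) : ℕ → ℝ
  | 0 => p
  | 1 => q
  | n + 2 => -(∑ i : Fin (n+1), τ i.1 * recA τ p q (n - i.1)) / ((n + 2) * (n + 1))
  decreasing_by omega

lemma recA_bound (τ : ℕ → ℝ) (p q C r : ℝ) (hr : 0 < r) (h : ∀ n, |τ n| * r ^ n ≤ C) :
    ∃ K D : ℝ, 0 < K ∧ ∀ n, |recA τ p q n| ≤ D * K ^ n := by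
  have hC : 0 ≤ C := by have := h 0; simp at this; exact (abs_nonneg _).trans this
  set K := max (max r⁻¹ 1) C with hK
  have hK1 : 1 ≤ K := (le_max_right _ _).trans (le_max_left _ _)
  have hKr : r⁻¹ ≤ K := (le_max_left _ _).trans (le_max_left _ _)
  have hKC : C ≤ K := le_max_right _ _
  have hK0 : 0 < K := by linarith
  have hτ : ∀ n, |τ n| ≤ C * K ^ n := by
    intro n
    calc |τ n| = (|τ n| * r ^ n) * (r⁻¹) ^ n := by
          rw [mul_assoc, ← mul_pow, mul_inv_cancel₀ hr.ne', one_pow, mul_one]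
      _ ≤ C * K ^ n := by
          have := h n
          gcongr
  set D := |p| + |q| with hD
  have hD0 : 0 ≤ D := by positivity
  refine ⟨K, D, hK0, fun n => ?_⟩
  induction n using Nat.strong_induction_on with
  | _ n ih =>
  match n, ih with
  | 0, _ => 
    rw [recA]; simp only [pow_zero, mul_one]
    rw [hD]; linarith [abs_nonneg q]
  | 1, _ =>
    rw [recA]
    have : D * 1 ≤ D * K ^ 1 := by gcongr; simpa using hK1
    have h2 : |q| ≤ D := by rw [hD]; linarith [abs_nonneg p]
    linarith
  | n + 2, ih =>
    rw [recA]
    have hpos : (0:ℝ) < (n + 2) * (n + 1) := by positivity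
    rw [abs_div, abs_neg, abs_of_pos hpos, div_le_iff₀ hpos]
    have h1 : ∀ i ∈ (Finset.univ : Finset (Fin (n+1))),
        |τ i.1 * recA τ p q (n - i.1)| ≤ C * D * K ^ n := by
      intro i _
      rw [abs_mul]
      have hi : i.1 ≤ n := by omega
      calc _ ≤ (C * K ^ i.1) * (D * K ^ (n - i.1)) := by
            gcongr
            · exact hτ _
            · exact ih _ (by omega)
        _ = C * D * (K ^ i.1 * K ^ (n - i.1)) := by ring
        _ = _ := by rw [← pow_add]; congr 2; omega
    refine (Finset.abs_sum_le_sum_abs _ _).trans ((Finset.sum_le_sum h1).trans ?_)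
    rw [Finset.sum_const, Finset.card_univ, Fintype.card_fin, nsmul_eq_mul]
    push_cast
    have h3 : C ≤ K ^ 2 := by nlinarith
    have h4 : C * D * K ^ n ≤ K ^ 2 * D * K ^ n := by gcongr
    have h5 : 0 ≤ K ^ 2 * D * K ^ n := by positivity
    calc ((n:ℝ) + 1) * (C * D * K ^ n) ≤ (n + 1) * (K ^ 2 * D * K ^ n) := by gcongr
      _ = 1 * ((n + 1) * (K ^ 2 * D * K ^ n)) := by ring
      _ ≤ (n + 2) * ((n + 1) * (K ^ 2 * D * K ^ n)) := by
          gcongr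
          have : (0:ℝ) ≤ n := by positivity
          linarith
      _ = _ := by ring

lemma local_sol (θ : ℝ → ℝ) (x : ℝ) (hθ : AnalyticAt ℝ θ x) (p q : ℝ) :
    ∃ f : ℝ → ℝ, AnalyticAt ℝ f x ∧ f x = p ∧ deriv f x = q ∧
      ∀ᶠ y in 𝓝 x, deriv (deriv f) y + θ y * f y = 0 := by
  have hp := hθ.hasFPowerSeriesAt
  obtain ⟨r, hr0, hr⟩ := ENNReal.lt_iff_exists_nnreal_btwn.mp hp.radius_pos
  obtain ⟨C, hC0, hC⟩ := FormalMultilinearSeries.norm_mul_pow_le_of_lt_radius _ hr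
  have hr0' : 0 < (r : ℝ) := by exact_mod_cast hr0
  obtain ⟨K, D, hK0, hKD⟩ := recA_bound (tc θ x) p q C r hr0' (by
    intro n
    have := hC n
    rwa [FormalMultilinearSeries.ofScalars_norm] at this)
  set a := recA (tc θ x) p q with ha
  set P := FormalMultilinearSeries.ofScalars ℝ a with hP
  have hrad : 0 < P.radius := by
    have hKi : 0 < K⁻¹ := by positivity
    refine lt_of_lt_of_le ?_ (P.le_radius_of_bound D (r := ⟨K⁻¹, hKi.le⟩) ?_)
    · exact ENNReal.coe_pos.mpr (by exact hKi)
    · intro n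
      rw [hP, FormalMultilinearSeries.ofScalars_norm]
      calc ‖a n‖ * K⁻¹ ^ n ≤ (D * K ^ n) * K⁻¹ ^ n := by
            gcongr; exact hKD n
        _ = D := by rw [mul_assoc, ← mul_pow, mul_inv_cancel₀ hK0.ne', one_pow, mul_one]
  have hsum := (P.hasFPowerSeriesOnBall hrad).comp_sub x
  rw [zero_add] at hsum
  set f : ℝ → ℝ := fun z => P.sum (z - x) with hf
  have hfP : HasFPowerSeriesAt f P x := hsum.hasFPowerSeriesAt
  have hfa : AnalyticAt ℝ f x := hfP.analyticAt
  have htc : tc f x = a := by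
    have := hfa.hasFPowerSeriesAt.eq_formalMultilinearSeries hfP
    exact FormalMultilinearSeries.ofScalars_series_injective ℝ ℝ this
  refine ⟨f, hfa, ?_, ?_, ?_⟩
  · have := congrFun htc 0
    rw [ha, recA] at this
    simpa [tc] using this
  · have := congrFun htc 1
    rw [ha, recA] at this
    simpa [tc] using this
  · have hdd : AnalyticAt ℝ (deriv (deriv f)) x := hfa.deriv.deriv
    apply tc_zero (hdd.add (hθ.mul hfa))
    intro n
    have h1 : tc (deriv (deriv f)) x n = (n+2) * (n+1) * a (n+2) := by
      rw [← htc]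
      unfold tc
      rw [iteratedDeriv_succ', iteratedDeriv_succ']
      have h1 : (n ! : ℝ) ≠ 0 := by positivity
      rw [Nat.factorial_succ, Nat.factorial_succ]
      push_cast
      field_simp
      ring
    have h2 := tc_add hdd (hθ.mul hfa) n
    have h3 := tc_mul hθ hfa n
    have h4 : a (n+2) = -(∑ i : Fin (n+1), tc θ x i.1 * a (n - i.1)) / ((n + 2) * (n + 1)) := by
      rw [ha, recA]
    rw [Fin.sum_univ_eq_sum_range (fun i => tc θ x i * a (n - i))] at h4
    change tc (fun y => deriv (deriv f) y + (θ * f) y) x n = 0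
    rw [h2, h1]
    change _ + tc (fun y => θ y * f y) x n = 0
    rw [h3, htc, h4]
    field_simp
    ring

lemma sol_analytic (θ : ℝ → ℝ) (hθ : ∀ x, AnalyticAt ℝ θ x) (f g : ℝ → ℝ)
    (hf : ∀ t, HasDerivAt f (g t) t) (hg : ∀ t, HasDerivAt g (-(θ t) * f t) t) (x : ℝ) :
    AnalyticAt ℝ f x := by
  obtain ⟨F, hFa, hF0, hF1, hF2⟩ := local_sol θ x (hθ x) (f x) (g x)
  have hev : ∀ᶠ y in 𝓝 x, AnalyticAt ℝ F y ∧ deriv (deriv F) y + θ y * F y = 0 :=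
    hFa.eventually_analyticAt.and hF2
  obtain ⟨δ, hδ, hball⟩ := Metric.eventually_nhds_iff_ball.mp hev
  rw [Real.ball_eq_Ioo] at hball
  have hθc : Continuous θ := continuous_iff_continuousAt.mpr fun t => (hθ t).continuousAt
  have hx : x ∈ Set.Ioo (x - δ) (x + δ) := ⟨by linarith, by linarith⟩
  have hEq := ode_unique (sysA θ) (sysA_cont θ hθc) hx (fun s => (f s, g s))
    (fun s => (F s, deriv F s)) (fun t _ => sys_hasDeriv (hf t) (hg t))
    (fun t ht => sys_hasDeriv (hball t ht).1.differentiableAt.hasDerivAt (by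
      have h := (hball t ht).1.deriv.differentiableAt.hasDerivAt
      have h2 := (hball t ht).2
      refine h.congr_deriv ?_
      rw [eq_neg_of_add_eq_zero_left h2]
      ring)) (by simp [hF0, hF1])
  have : F =ᶠ[𝓝 x] f := by
    filter_upwards [Ioo_mem_nhds hx.1 hx.2] with y hy
    exact (congrArg Prod.fst (hEq hy)).symm
  exact hFa.congr this

lemma hk_sum (a : ℕ → ℝ) (d : ℕ) (Q : Polynomial ℝ) (hQ : Q.natDegree ≤ d) (j : ℕ) :
    ∑ k ∈ Finset.range (d + 1 + j + 1), Q.coeff k * a (d + 1 + j - k) =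
      ∑ e : Fin (d+1), Q.coeff (d - e.1) * a (e.1 + j + 1) := by
  rw [Fin.sum_univ_eq_sum_range (fun e => Q.coeff (d - e) * a (e + j + 1))]
  rw [← Finset.sum_range_reflect (fun e => Q.coeff (d - e) * a (e + j + 1))]
  have hsub : Finset.range (d+1) ⊆ Finset.range (d + 1 + j + 1) := by
    apply Finset.range_subset_range.mpr; omega
  rw [← Finset.sum_subset hsub]
  · refine Finset.sum_congr rfl fun k hk => ?_
    have hk' : k < d + 1 := Finset.mem_range.mp hk
    congr 2 <;> omega
  · intro k _ hk
    have hk' : ¬ k < d + 1 := fun h => hk (Finset.mem_range.mpr h)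
    rw [Polynomial.coeff_eq_zero_of_natDegree_lt (by omega), zero_mul]

lemma hk_iff (a : ℕ → ℝ) (d : ℕ) :
    (∀ n, (Matrix.of fun i j : Fin n => a (i.1 + j.1 + 1)).rank ≤ d) ↔
    ∃ Q : Polynomial ℝ, Q ≠ 0 ∧ Q.natDegree ≤ d ∧
      ∀ m, d < m → ∑ k ∈ Finset.range (m + 1), Q.coeff k * a (m - k) = 0 := by
  constructor
  · intro h
    obtain ⟨c, hc, hcs⟩ := hk_exists a d h
    let Q : Polynomial ℝ := ∑ e : Fin (d+1), Polynomial.monomial (d - e.1) (c e)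
    have hco : ∀ e : Fin (d+1), Q.coeff (d - e.1) = c e := by
      intro e
      simp only [Q, Polynomial.finsetSum_coeff, Polynomial.coeff_monomial]
      rw [Finset.sum_eq_single e]
      · simp
      · intro b _ hb
        rw [if_neg]
        intro h
        apply hb
        ext
        omega
      · simp
    have hdeg : Q.natDegree ≤ d := by
      apply Polynomial.natDegree_sum_le_of_forall_le
      intro e _
      exact (Polynomial.natDegree_monomial_le _).trans (Nat.sub_le _ _)
    refine ⟨Q, ?_, hdeg, ?_⟩
    · intro h0
      apply hc
      ext e
      rw [← hco e, h0]; simp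
    · intro m hm
      obtain ⟨j, rfl⟩ := Nat.exists_eq_add_of_lt hm
      rw [show d + j + 1 = d + 1 + j by ring, hk_sum a d Q hdeg]
      simp only [hco]
      exact hcs j
  · rintro ⟨Q, hQ0, hdeg, hQ⟩
    refine hk_rank a d (fun e => Q.coeff (d - e.1)) ?_ ?_
    · intro h
      apply hQ0
      ext k
      by_cases hk : k ≤ d
      · have := congrFun h ⟨d - k, by omega⟩
        simp only at this
        rw [show d - (d - k) = k by omega] at this
        simpa using this
      · rw [Polynomial.coeff_eq_zero_of_natDegree_lt (by omega)]; simp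
    · intro j
      rw [← hk_sum a d Q hdeg]
      exact hQ _ (by omega)

lemma poly_analytic (p : Polynomial ℝ) (x : ℝ) : AnalyticAt ℝ (fun y => p.eval y) x := by
  have := AnalyticAt.aeval_polynomial (analyticAt_id (𝕜 := ℝ) (z := x)) p
  simpa using this

lemma rank_iff (ph : ℝ → ℝ) (hph : AnalyticAt ℝ ph 0) (d : ℕ) :
    (∀ n, (Matrix.of fun i j : Fin n => tc ph 0 (i.1 + j.1 + 1)).rank ≤ d) ↔
    ∃ Q P : Polynomial ℝ, Q ≠ 0 ∧ Q.natDegree ≤ d ∧ P.natDegree ≤ d ∧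
      ∀ᶠ t in 𝓝 0, Q.eval t * ph t = P.eval t := by
  rw [hk_iff]
  have hmul : ∀ (Q : Polynomial ℝ) m, tc (fun y => Q.eval y * ph y) 0 m =
      ∑ k ∈ Finset.range (m + 1), Q.coeff k * tc ph 0 (m - k) := by
    intro Q m
    rw [tc_mul (poly_analytic Q 0) hph]
    simp only [tc_poly]
  constructor
  · rintro ⟨Q, hQ0, hdeg, hQ⟩
    let P : Polynomial ℝ := ∑ m ∈ Finset.range (d+1),
      Polynomial.monomial m (tc (fun y => Q.eval y * ph y) 0 m)
    have hP : ∀ n, P.coeff n = tc (fun y => Q.eval y * ph y) 0 n := by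
      intro n
      simp only [P, Polynomial.finsetSum_coeff, Polynomial.coeff_monomial]
      rw [Finset.sum_ite_eq' (Finset.range (d+1)) n]
      split_ifs with h
      · rfl
      · rw [hmul, hQ]
        simp at h
        omega
    have hPd : P.natDegree ≤ d := by
      apply Polynomial.natDegree_sum_le_of_forall_le
      intro e he
      exact (Polynomial.natDegree_monomial_le _).trans (by simp at he; omega)
    refine ⟨Q, P, hQ0, hdeg, hPd, ?_⟩
    have hA : AnalyticAt ℝ (fun y => Q.eval y * ph y) 0 := (poly_analytic Q 0).mul hph
    have := tc_zero (f := fun y => Q.eval y * ph y - P.eval y) (hA.sub (poly_analytic P 0)) (by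
      intro n
      rw [tc_sub hA (poly_analytic P 0), tc_poly, hP, sub_self])
    filter_upwards [this] with t ht
    linarith
  · rintro ⟨Q, P, hQ0, hQd, hPd, h⟩
    refine ⟨Q, hQ0, hQd, fun m hm => ?_⟩
    rw [← hmul, tc_congr h, tc_poly]
    exact Polynomial.coeff_eq_zero_of_natDegree_lt (by omega)

lemma isSol_deriv {θ f : ℝ → ℝ} (h : IsSolution θ f) :
    (∀ t, HasDerivAt f (deriv f t) t) ∧ (∀ t, HasDerivAt (deriv f) (-(θ t) * f t) t) := by
  obtain ⟨hc, he⟩ := h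
  have h1 := contDiff_infty_iff_deriv.mp hc
  have h2 := contDiff_infty_iff_deriv.mp h1.2
  refine ⟨fun t => (h1.1 t).hasDerivAt, fun t => ?_⟩
  refine (h2.1 t).hasDerivAt.congr_deriv ?_
  rw [eq_neg_of_add_eq_zero_left (he t)]
  ring

lemma exists_sol (θ : ℝ → ℝ) (hθ : ∀ x, AnalyticAt ℝ θ x) (x p q : ℝ) :
    ∃ f, IsSolution θ f ∧ f x = p ∧ deriv f x = q := by
  have hθc : Continuous θ := continuous_iff_continuousAt.mpr fun t => (hθ t).continuousAt
  obtain ⟨F, hF0, hF⟩ := ode_exists (sysA θ) (sysA_cont θ hθc) x (p, q)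
  have h1 : ∀ t, HasDerivAt (fun s => (F s).1) ((F t).2) t := by
    intro t
    have := (hF t).fst
    rwa [sysA_apply] at this
  have h2 : ∀ t, HasDerivAt (fun s => (F s).2) (-(θ t) * (F t).1) t := by
    intro t
    have := (hF t).snd
    rwa [sysA_apply] at this
  have hd : deriv (fun s => (F s).1) = fun s => (F s).2 := by
    ext t; exact (h1 t).deriv
  refine ⟨fun s => (F s).1, ⟨?_, ?_⟩, by simp [hF0], by rw [hd]; simp [hF0]⟩
  · rw [contDiff_iff_contDiffAt]
    intro t
    exact (sol_analytic θ hθ _ _ h1 h2 t).contDiffAt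
  · intro t
    rw [hd, (h2 t).deriv]
    ring

lemma exists_fund (θ : ℝ → ℝ) (hθ : ∀ x, AnalyticAt ℝ θ x) (x : ℝ) :
    ∃ f₁ f₂, IsFundPair θ x f₁ f₂ := by
  obtain ⟨f₁, h1, h2, h3⟩ := exists_sol θ hθ x 1 0
  obtain ⟨f₂, k1, k2, k3⟩ := exists_sol θ hθ x 0 1
  exact ⟨f₁, f₂, h1, k1, h2, h3, k2, k3⟩

lemma sol_combo (θ : ℝ → ℝ) (hθ : ∀ x, AnalyticAt ℝ θ x) {f F₁ F₂ : ℝ → ℝ} {x : ℝ}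
    (hf : IsSolution θ f) (hF : IsFundPair θ x F₁ F₂) (y : ℝ) :
    f y = f x * F₁ y + deriv f x * F₂ y ∧
    deriv f y = f x * deriv F₁ y + deriv f x * deriv F₂ y := by
  have hθc : Continuous θ := continuous_iff_continuousAt.mpr fun t => (hθ t).continuousAt
  obtain ⟨hF1, hF2, e1, e2, e3, e4⟩ := hF
  obtain ⟨a1, a2⟩ := isSol_deriv hf
  obtain ⟨b1, b2⟩ := isSol_deriv hF1
  obtain ⟨c1, c2⟩ := isSol_deriv hF2
  have hx : x ∈ Set.Ioo (min x y - 1) (max x y + 1) :=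
    ⟨by linarith [min_le_left x y], by linarith [le_max_left x y]⟩
  have hy : y ∈ Set.Ioo (min x y - 1) (max x y + 1) :=
    ⟨by linarith [min_le_right x y], by linarith [le_max_right x y]⟩
  have := ode_unique (sysA θ) (sysA_cont θ hθc) hx (fun s => (f s, deriv f s))
    (fun s => (f x * F₁ s + deriv f x * F₂ s, f x * deriv F₁ s + deriv f x * deriv F₂ s))
    (fun t _ => sys_hasDeriv (a1 t) (a2 t))
    (fun t _ => sys_hasDeriv (((b1 t).const_mul _).add ((c1 t).const_mul _))
      ((((b2 t).const_mul _).add ((c2 t).const_mul _)).congr_deriv (by ring)))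
    (by simp [e1, e2, e3, e4]) hy
  exact ⟨congrArg Prod.fst this, congrArg Prod.snd this⟩

noncomputable def TR (R x y : ℝ) : ℝ := (1 - Real.exp (-(Real.pi / R) * (y - x))) / (Real.pi / R)

lemma gR_TR {R : ℝ} (hR : 0 < R) (x y : ℝ) : gR R (TR R x y) = y - x := by
  have hpi := Real.pi_pos
  have hc : Real.pi / R ≠ 0 := by positivity
  unfold gR TR
  rw [mul_div_cancel₀ _ hc, sub_sub_cancel, Real.log_exp]
  field_simp

lemma TR_gR {R : ℝ} (hR : 0 < R) (x : ℝ) : ∀ᶠ t in 𝓝 (0:ℝ), TR R x (x + gR R t) = t := by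
  have hpi := Real.pi_pos
  have hc : Real.pi / R ≠ 0 := by positivity
  have : ∀ᶠ t in 𝓝 (0:ℝ), 0 < 1 - (Real.pi / R) * t := by
    have hcont : ContinuousAt (fun t : ℝ => 1 - (Real.pi / R) * t) 0 := by fun_prop
    apply hcont.eventually_const_lt
    simp
  filter_upwards [this] with t ht
  unfold TR gR
  rw [show -(Real.pi / R) * (x + -(R / Real.pi) * Real.log (1 - Real.pi / R * t) - x) =
    Real.log (1 - Real.pi / R * t) by field_simp; ring]
  rw [Real.exp_log ht]
  field_simp
  ring

lemma TR_affine {R : ℝ} (hR : 0 < R) (x₁ x₂ : ℝ) : ∃ s b : ℝ, s ≠ 0 ∧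
    ∀ y, TR R x₁ y = s * TR R x₂ y + b := by
  have hpi := Real.pi_pos
  have hc : Real.pi / R ≠ 0 := by positivity
  refine ⟨Real.exp (-(Real.pi / R) * (x₂ - x₁)),
    (1 - Real.exp (-(Real.pi / R) * (x₂ - x₁))) / (Real.pi / R), (Real.exp_pos _).ne', fun y => ?_⟩
  unfold TR
  rw [show -(Real.pi / R) * (y - x₁) = -(Real.pi / R) * (x₂ - x₁) + -(Real.pi / R) * (y - x₂) by ring,
    Real.exp_add]
  field_simp
  ring

lemma gR_analytic (R : ℝ) : AnalyticAt ℝ (gR R) 0 := by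
  unfold gR
  have h : AnalyticAt ℝ (fun t : ℝ => 1 - (Real.pi / R) * t) 0 := by fun_prop
  exact analyticAt_const.mul (h.log (by simp))

lemma TR_analytic (R x y : ℝ) : AnalyticAt ℝ (TR R x) y := by
  unfold TR
  fun_prop

lemma gR_zero (R : ℝ) : gR R 0 = 0 := by simp [gR]

lemma shift_tendsto (R x : ℝ) : Filter.Tendsto (fun t => x + gR R t) (𝓝 0) (𝓝 x) := by
  have := ((gR_analytic R).continuousAt.tendsto).const_add x
  rwa [gR_zero, add_zero] at this

lemma comp_shift_analytic (R x : ℝ) {f : ℝ → ℝ} (hf : AnalyticAt ℝ f x) :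
    AnalyticAt ℝ (fun t => f (x + gR R t)) 0 := by
  have h : AnalyticAt ℝ (fun t => x + gR R t) 0 := analyticAt_const.add (gR_analytic R)
  have hf' : AnalyticAt ℝ f ((fun t => x + gR R t) 0) := by simpa [gR_zero] using hf
  exact AnalyticAt.comp hf' h

lemma sol_an {θ : ℝ → ℝ} (hθ : ∀ x, AnalyticAt ℝ θ x) {f : ℝ → ℝ} (h : IsSolution θ f) (x : ℝ) :
    AnalyticAt ℝ f x :=
  sol_analytic θ hθ f (deriv f) (isSol_deriv h).1 (isSol_deriv h).2 x

lemma phi_analytic {θ : ℝ → ℝ} (hθ : ∀ x, AnalyticAt ℝ θ x) (R : ℝ) {x : ℝ} {f₁ f₂ : ℝ → ℝ}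
    (h : IsFundPair θ x f₁ f₂) :
    AnalyticAt ℝ (fun t => f₂ (x + gR R t) / f₁ (x + gR R t)) 0 := by
  refine (comp_shift_analytic R x (sol_an hθ h.2.1 x)).fun_div
    (comp_shift_analytic R x (sol_an hθ h.1 x)) ?_
  rw [gR_zero, add_zero, h.2.2.1]
  exact one_ne_zero

lemma fund_ne {θ : ℝ → ℝ} (hθ : ∀ x, AnalyticAt ℝ θ x) (R : ℝ) {x : ℝ} {f₁ f₂ : ℝ → ℝ}
    (h : IsFundPair θ x f₁ f₂) : ∀ᶠ t in 𝓝 (0:ℝ), f₁ (x + gR R t) ≠ 0 := by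
  have hc := (comp_shift_analytic R x (sol_an hθ h.1 x)).continuousAt
  apply hc.eventually_ne
  rw [gR_zero, add_zero, h.2.2.1]
  exact one_ne_zero

lemma main_le {θ : ℝ → ℝ} (hθ : ∀ x, AnalyticAt ℝ θ x) {R : ℝ} (hR : 0 < R) {x₁ x₂ : ℝ}
    {f₁ f₂ F₁ F₂ : ℝ → ℝ} (hf : IsFundPair θ x₁ f₁ f₂) (hF : IsFundPair θ x₂ F₁ F₂) (d : ℕ)
    (h : ∀ n, (Matrix.of fun i j : Fin n =>
      tc (fun t => f₂ (x₁ + gR R t) / f₁ (x₁ + gR R t)) 0 (i.1 + j.1 + 1)).rank ≤ d) :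
    ∀ n, (Matrix.of fun i j : Fin n =>
      tc (fun t => F₂ (x₂ + gR R t) / F₁ (x₂ + gR R t)) 0 (i.1 + j.1 + 1)).rank ≤ d := by
  rw [rank_iff _ (phi_analytic hθ R hf)] at h
  rw [rank_iff _ (phi_analytic hθ R hF)]
  obtain ⟨Q, P, hQ0, hQd, hPd, hQP⟩ := h
  -- transfer to a relation in `y` near `x₁`
  have hTt : Filter.Tendsto (TR R x₁) (𝓝 x₁) (𝓝 0) := by
    have := (TR_analytic R x₁ x₁).continuousAt.tendsto
    rwa [show TR R x₁ x₁ = 0 by simp [TR]] at this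
  have hloc : (fun y => Q.eval (TR R x₁ y) * f₂ y) =ᶠ[𝓝 x₁]
      (fun y => P.eval (TR R x₁ y) * f₁ y) := by
    filter_upwards [hTt.eventually hQP, hTt.eventually (fund_ne hθ R hf)] with y h1 h2
    rw [gR_TR hR] at h1 h2
    rw [add_sub_cancel] at h1 h2
    rw [← h1]
    field_simp
  have hglob : (fun y => Q.eval (TR R x₁ y) * f₂ y) = (fun y => P.eval (TR R x₁ y) * f₁ y) := by
    refine AnalyticOnNhd.eq_of_eventuallyEq (𝕜 := ℝ) ?_ ?_ hloc
    · intro y _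
      exact (AnalyticAt.comp (poly_analytic Q _) (TR_analytic R x₁ y)).mul (sol_an hθ hf.2.1 y)
    · intro y _
      exact (AnalyticAt.comp (poly_analytic P _) (TR_analytic R x₁ y)).mul (sol_an hθ hf.1 y)
  obtain ⟨s, b, hs, hsb⟩ := TR_affine hR x₁ x₂
  let L : Polynomial ℝ := Polynomial.C s * Polynomial.X + Polynomial.C b
  have hLd : L.natDegree = 1 := Polynomial.natDegree_linear hs
  have hLe : ∀ p : Polynomial ℝ, ∀ y, p.eval (TR R x₁ y) = (p.comp L).eval (TR R x₂ y) := by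
    intro p y
    rw [Polynomial.eval_comp, hsb]
    simp [L]
  set Q' := Q.comp L with hQ'
  set P' := P.comp L with hP'
  have hQ'd : Q'.natDegree ≤ d := by rw [hQ', Polynomial.natDegree_comp, hLd, mul_one]; exact hQd
  have hP'd : P'.natDegree ≤ d := by rw [hP', Polynomial.natDegree_comp, hLd, mul_one]; exact hPd
  have hQ'0 : Q' ≠ 0 := by
    rw [hQ', Ne, Polynomial.comp_eq_zero_iff]
    rintro (h | ⟨-, h⟩)
    · exact hQ0 h
    · rw [h, Polynomial.natDegree_C] at hLd
      exact zero_ne_one hLd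
  obtain ⟨α, hα⟩ : ∃ α, α = f₁ x₂ := ⟨_, rfl⟩
  obtain ⟨β, hβ⟩ : ∃ β, β = deriv f₁ x₂ := ⟨_, rfl⟩
  obtain ⟨γ, hγ⟩ : ∃ γ, γ = f₂ x₂ := ⟨_, rfl⟩
  obtain ⟨δ, hδ⟩ : ∃ δ, δ = deriv f₂ x₂ := ⟨_, rfl⟩
  have c1 := sol_combo θ hθ hf.1 hF
  have c2 := sol_combo θ hθ hf.2.1 hF
  rw [← hα, ← hβ] at c1
  rw [← hγ, ← hδ] at c2
  have hdet : α * δ - β * γ ≠ 0 := by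
    intro h0
    obtain ⟨-, -, e1, e2, e3, e4⟩ := hf
    have k1 := (c1 x₁).1
    have k2 := (c1 x₁).2
    have k3 := (c2 x₁).1
    have k4 := (c2 x₁).2
    rw [e1] at k1
    rw [e2] at k2
    rw [e3] at k3
    rw [e4] at k4
    have : (1:ℝ) * 1 - 0 * 0 = (α * δ - β * γ) * (F₁ x₁ * deriv F₂ x₁ - deriv F₁ x₁ * F₂ x₁) := by
      nth_rewrite 1 [k1]
      nth_rewrite 1 [k4]
      nth_rewrite 1 [k2]
      nth_rewrite 1 [k3]
      ring
    rw [h0] at this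
    norm_num at this
  have hrel : ∀ y, (Polynomial.C δ * Q' - Polynomial.C β * P').eval (TR R x₂ y) * F₂ y =
      (Polynomial.C α * P' - Polynomial.C γ * Q').eval (TR R x₂ y) * F₁ y := by
    intro y
    have h1 := congrFun hglob y
    rw [hLe, hLe, (c1 y).1, (c2 y).1] at h1
    simp only [Polynomial.eval_sub, Polynomial.eval_mul, Polynomial.eval_C]
    linear_combination h1
  have hrel0 : ∀ᶠ t in 𝓝 (0:ℝ),
      (Polynomial.C δ * Q' - Polynomial.C β * P').eval t * F₂ (x₂ + gR R t) =
      (Polynomial.C α * P' - Polynomial.C γ * Q').eval t * F₁ (x₂ + gR R t) := by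
    filter_upwards [TR_gR hR x₂] with t ht
    have := hrel (x₂ + gR R t)
    rwa [ht] at this
  have hdegc : ∀ (u v : ℝ) (A B : Polynomial ℝ), A.natDegree ≤ d → B.natDegree ≤ d →
      (Polynomial.C u * A - Polynomial.C v * B).natDegree ≤ d := by
    intro u v A B hA hB
    refine (Polynomial.natDegree_sub_le _ _).trans (max_le ?_ ?_)
    · exact (Polynomial.natDegree_C_mul_le _ _).trans hA
    · exact (Polynomial.natDegree_C_mul_le _ _).trans hB
  refine ⟨Polynomial.C δ * Q' - Polynomial.C β * P', Polynomial.C α * P' - Polynomial.C γ * Q', ?_,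
    hdegc _ _ _ _ hQ'd hP'd, hdegc _ _ _ _ hP'd hQ'd, ?_⟩
  · intro h0
    have hP0 : Polynomial.C α * P' - Polynomial.C γ * Q' = 0 := by
      have hev : (fun t => (Polynomial.C α * P' - Polynomial.C γ * Q').eval t) =ᶠ[𝓝 0]
          (fun t => (0 : Polynomial ℝ).eval t) := by
        filter_upwards [hrel0, fund_ne hθ R hF] with t h1 h2
        rw [h0, Polynomial.eval_zero, zero_mul] at h1
        rw [Polynomial.eval_zero]
        exact (mul_eq_zero.mp h1.symm).resolve_right h2
      ext n
      rw [← tc_poly, tc_congr hev, tc_poly]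
    have : Polynomial.C (α * δ - β * γ) * Q' = 0 := by
      simp only [Polynomial.C_sub, Polynomial.C_mul]
      linear_combination Polynomial.C α * h0 + Polynomial.C β * hP0
    rcases mul_eq_zero.mp this with h | h
    · exact hdet (Polynomial.C_eq_zero.mp h)
    · exact hQ'0 h
  · filter_upwards [hrel0, fund_ne hθ R hF] with t h1 h2
    rw [← mul_div_assoc, h1]
    field_simp

end

noncomputable section

open MeasureTheory Filter

/-- For real analytic θ and `R > 0`, the function
`ρ(x) := sup_n rank (n×n Hankel matrix of 𝒮_{i+j-1}^{θ,g_R}(x)/(i+j-1)!)` is constant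
on ℝ. -/
theorem stmt17 (θ : ℝ → ℝ) (hθ : ∀ x : ℝ, AnalyticAt ℝ θ x) (R : ℝ) (hR : 0 < R)
    (S : ℕ → ℝ → ℝ)
    (hS : ∀ (n : ℕ) (x : ℝ) (f₁ f₂ : ℝ → ℝ), IsFundPair θ x f₁ f₂ →
      S n x = SchR R x f₁ f₂ n) :
    ∀ x₁ x₂ : ℝ,
      (⨆ n : ℕ, ((Matrix.of fun i j : Fin n =>
        S (i.1 + j.1 + 1) x₁ / (Nat.factorial (i.1 + j.1 + 1) : ℝ)).rank : ℕ∞)) =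
      (⨆ n : ℕ, ((Matrix.of fun i j : Fin n =>
        S (i.1 + j.1 + 1) x₂ / (Nat.factorial (i.1 + j.1 + 1) : ℝ)).rank : ℕ∞)) := by
  have key : ∀ x₁ x₂ : ℝ,
      (⨆ n : ℕ, ((Matrix.of fun i j : Fin n =>
        S (i.1 + j.1 + 1) x₂ / (Nat.factorial (i.1 + j.1 + 1) : ℝ)).rank : ℕ∞)) ≤
      (⨆ n : ℕ, ((Matrix.of fun i j : Fin n =>
        S (i.1 + j.1 + 1) x₁ / (Nat.factorial (i.1 + j.1 + 1) : ℝ)).rank : ℕ∞)) := by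
    intro x₁ x₂
    obtain ⟨f₁, f₂, hf⟩ := exists_fund θ hθ x₁
    obtain ⟨F₁, F₂, hF⟩ := exists_fund θ hθ x₂
    have e1 : ∀ n, S n x₁ / (Nat.factorial n : ℝ) =
        tc (fun t => f₂ (x₁ + gR R t) / f₁ (x₁ + gR R t)) 0 n := fun n => by
      rw [hS n x₁ f₁ f₂ hf]; rfl
    have e2 : ∀ n, S n x₂ / (Nat.factorial n : ℝ) =
        tc (fun t => F₂ (x₂ + gR R t) / F₁ (x₂ + gR R t)) 0 n := fun n => by
      rw [hS n x₂ F₁ F₂ hF]; rfl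
    simp only [e1, e2]
    rcases eq_or_ne (⨆ n : ℕ, ((Matrix.of fun i j : Fin n =>
        tc (fun t => f₂ (x₁ + gR R t) / f₁ (x₁ + gR R t)) 0 (i.1 + j.1 + 1)).rank : ℕ∞)) ⊤
      with htop | htop
    · rw [htop]; exact le_top
    · obtain ⟨d, hd⟩ := ENat.ne_top_iff_exists.mp htop
      rw [← hd]
      refine iSup_le fun n => ?_
      have := main_le hθ hR hf hF d (fun n => by
        have h1 := le_iSup (fun n : ℕ => ((Matrix.of fun i j : Fin n =>
          tc (fun t => f₂ (x₁ + gR R t) / f₁ (x₁ + gR R t)) 0 (i.1 + j.1 + 1)).rank : ℕ∞)) n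
        rw [← hd] at h1
        exact_mod_cast h1) n
      exact_mod_cast this
  intro x₁ x₂
  exact le_antisymm (key x₂ x₁) (key x₁ x₂)

end
end
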